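/- For every ε > 0 the following holds: for n ranging over even natural numbers and Δ drawn from U(n), the probability that the number of (n/2+1)-element subsets of [n] that are holes of Δ is at least (1−ε)·2^{(n−1)/2}/√(πn) tends to 1 as n → ∞. -/

import Mathlib

open scoped Classical

noncomputable section

/-- `Δ` is a simplicial complex on vertex set `Fin n`: all faces are nonempty
and it is downward closed. -/
def IsComplex {n : ℕ} (Δ : Finset (Finset (Fin n))) : Prop :=
  (∀ x ∈ Δ, x.Nonempty) ∧
    ∀ x ∈ Δ, ∀ y : Finset (Fin n), y.Nonempty → y ⊆ x → y ∈ Δ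

/-- The finite set of all simplicial complexes on `n` vertices. -/
def allComplexes (n : ℕ) : Finset (Finset (Finset (Fin n))) :=
  Finset.univ.filter IsComplex

/-- The probability, under the uniform measure `U(n)` on all simplicial
complexes on `n` vertices, of the event `P`. -/
def uniformProb (n : ℕ) (P : Finset (Finset (Fin n)) → Prop) : ℝ :=
  (((allComplexes n).filter P).card : ℝ) / ((allComplexes n).card : ℝ)

/-- `x` is a hole of `Δ` of dimension `m`: an `(m+1)`-set that is not a face
although all its `m`-subsets are faces. -/
def IsHole {n : ℕ} (Δ : Finset (Finset (Fin n))) (m : ℕ) (x : Finset (Fin n)) : Prop :=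
  x.card = m + 1 ∧ x ∉ Δ ∧ ∀ y ⊆ x, y.card = m → y ∈ Δ

/-!
Whether an `m`-set is a face is decided by the other faces of `Δ` only if it is a facet of an
`(m + 1)`-face or has a nonempty facet outside `Δ`; call such `m`-sets constrained. Given the faces
off the middle layer, the unconstrained `m`-sets are faces independently with probability `1 / 2`.

For `n = 2 * m` constrained sets are rare. Conditioning off the middle layer bounds the exponential
moment of their number by the product of two partition functions `∑ 2 ^ (-c #∂(A # (m + 1)))` over
truncated downsets, one for `Δ` and one for its Alexander dual. Such a sum is bounded layer by
layer from the top, and for each layer Finner's inequality factors it into local sums, one for each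
set two levels down, which are at most `exp (localLogBound n)`. Markov's inequality then gives
`o(C(2m, m) / m)` constrained sets with high probability.

Every `(m + 1)`-set that is not a face and has no blocked facet becomes a hole as soon as all its
facets are chosen, which has probability at least `2 ^ (-(m + 1))`. There are `(1 - o(1)) C(2m, m)`
such sets, two of them share at most one facet, and Chebyshev's inequality bounds their number of
holes from below by `(1 - ε) C(2m, m) / 2 ^ (m + 1)`; Stirling's formula identifies the scale.
-/

section

open Finset
open scoped FinsetFamily

section Finner

variable {ι β : Type*} {s : Finset ι} {w : ι → ℝ}

lemma prod_rpow_le_sum_div_mul_prod_rpow {x y : ι → ℝ} (hw : ∀ i ∈ s, 0 ≤ w i)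
    (hw₁ : ∑ i ∈ s, w i = 1) (hx : ∀ i ∈ s, 0 ≤ x i) (hxy : ∀ i ∈ s, x i ≤ y i) :
    ∏ i ∈ s, x i ^ w i ≤ (∑ i ∈ s, w i * (x i / y i)) * ∏ i ∈ s, y i ^ w i := by
  have hy : ∀ i ∈ s, 0 ≤ y i := fun i hi => (hx i hi).trans (hxy i hi)
  have hfactor : ∏ i ∈ s, x i ^ w i = (∏ i ∈ s, (x i / y i) ^ w i) * ∏ i ∈ s, y i ^ w i := by
    rw [← prod_mul_distrib]
    refine prod_congr rfl fun i hi => ?_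
    rw [← Real.mul_rpow (div_nonneg (hx i hi) (hy i hi)) (hy i hi),
      div_mul_cancel_of_imp fun h => le_antisymm (h ▸ hxy i hi) (hx i hi)]
  rw [hfactor]
  refine mul_le_mul_of_nonneg_right ?_ (prod_nonneg fun i hi => Real.rpow_nonneg (hy i hi) _)
  exact Real.geom_mean_le_arith_mean_weighted s w _ hw hw₁
    fun i hi => div_nonneg (hx i hi) (hy i hi)

lemma prod_rpow_add_prod_rpow_le {x y : ι → ℝ} (hw : ∀ i ∈ s, 0 ≤ w i)
    (hw₁ : ∑ i ∈ s, w i = 1) (hx : ∀ i ∈ s, 0 ≤ x i) (hy : ∀ i ∈ s, 0 ≤ y i) :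
    ∏ i ∈ s, x i ^ w i + ∏ i ∈ s, y i ^ w i ≤ ∏ i ∈ s, (x i + y i) ^ w i := by
  have hsum : ∑ i ∈ s, w i * (x i / (x i + y i)) + ∑ i ∈ s, w i * (y i / (x i + y i)) ≤ 1 := by
    rw [← sum_add_distrib, ← hw₁]
    refine sum_le_sum fun i hi => ?_
    rw [← mul_add, ← add_div]
    exact mul_le_of_le_one_right (hw i hi) (div_self_le_one _)
  calc ∏ i ∈ s, x i ^ w i + ∏ i ∈ s, y i ^ w i
      ≤ (∑ i ∈ s, w i * (x i / (x i + y i)) + ∑ i ∈ s, w i * (y i / (x i + y i))) *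
          ∏ i ∈ s, (x i + y i) ^ w i := by
        rw [add_mul]
        exact add_le_add
          (prod_rpow_le_sum_div_mul_prod_rpow hw hw₁ hx
            fun i hi => le_add_of_nonneg_right (hy i hi))
          (prod_rpow_le_sum_div_mul_prod_rpow hw hw₁ hy
            fun i hi => le_add_of_nonneg_left (hx i hi))
    _ ≤ ∏ i ∈ s, (x i + y i) ^ w i := mul_le_of_le_one_left
        (prod_nonneg fun i hi => Real.rpow_nonneg (add_nonneg (hx i hi) (hy i hi)) _) hsum

lemma prod_rpow_add_prod_rpow_le_of_eq_off {x y z : ι → ℝ} (p : ι → Prop) [DecidablePred p]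
    (hw : ∀ i ∈ s, 0 ≤ w i) (hw₁ : ∑ i ∈ s with p i, w i = 1)
    (hx : ∀ i ∈ s, 0 ≤ x i) (hy : ∀ i ∈ s, 0 ≤ y i)
    (hz : ∀ i ∈ s, p i → z i = x i + y i) (hxz : ∀ i ∈ s, ¬ p i → x i = z i)
    (hyz : ∀ i ∈ s, ¬ p i → y i = z i) :
    ∏ i ∈ s, x i ^ w i + ∏ i ∈ s, y i ^ w i ≤ ∏ i ∈ s, z i ^ w i := by
  have hoff : ∀ u : ι → ℝ, (∀ i ∈ s, ¬ p i → u i = z i) →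
      ∏ i ∈ s, u i ^ w i = (∏ i ∈ s with p i, u i ^ w i) * ∏ i ∈ s with ¬ p i, z i ^ w i := by
    intro u hu
    rw [← prod_filter_mul_prod_filter_not s p]
    congr 1
    exact prod_congr rfl fun i hi => by rw [hu i (mem_filter.1 hi).1 (mem_filter.1 hi).2]
  have hon : ∏ i ∈ s with p i, z i ^ w i = ∏ i ∈ s with p i, (x i + y i) ^ w i :=
    prod_congr rfl fun i hi => by rw [hz i (mem_filter.1 hi).1 (mem_filter.1 hi).2]
  rw [hoff x hxz, hoff y hyz, hoff z fun _ _ _ => rfl, ← add_mul, hon]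
  refine mul_le_mul_of_nonneg_right ?_ (prod_nonneg fun i hi => ?_)
  · exact prod_rpow_add_prod_rpow_le (fun i hi => hw i (mem_filter.1 hi).1) hw₁
      (fun i hi => hx i (mem_filter.1 hi).1) (fun i hi => hy i (mem_filter.1 hi).1)
  · rw [← hxz i (mem_filter.1 hi).1 (mem_filter.1 hi).2]
    exact Real.rpow_nonneg (hx i (mem_filter.1 hi).1) _

-- Finner's inequality for the uniform measure on the subsets of `E`.
lemma sum_powerset_prod_rpow_le [DecidableEq β] (hw : ∀ i ∈ s, 0 ≤ w i) (T : ι → Finset β)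
    (E : Finset β) (hT : ∀ e ∈ E, ∑ i ∈ s with e ∈ T i, w i = 1)
    (g : ι → Finset β → ℝ) (hg : ∀ i V, 0 ≤ g i V) :
    ∑ U ∈ E.powerset, ∏ i ∈ s, g i (U ∩ T i) ^ w i ≤
      ∏ i ∈ s, (∑ V ∈ (E ∩ T i).powerset, g i V) ^ w i := by
  induction E using Finset.induction_on generalizing g with
  | empty => simp
  | insert e E he ih =>
    let g' : ι → Finset β → ℝ := fun i V => if e ∈ T i then g i (insert e V) else g i V
    have hg' : ∀ i V, 0 ≤ g' i V := fun i V => by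
      by_cases hi : e ∈ T i <;> simp only [g', hi, if_true, if_false] <;> exact hg _ _
    have hins : ∀ i U, g i (insert e U ∩ T i) = g' i (U ∩ T i) := fun i U => by
      by_cases hi : e ∈ T i
      · simp only [g', hi, if_true, insert_inter_of_mem]
      · simp only [g', hi, if_false, insert_inter_of_notMem, not_false_iff]
    have hT' : ∀ e' ∈ E, ∑ i ∈ s with e' ∈ T i, w i = 1 := fun e' h => hT e' (mem_insert_of_mem h)
    rw [sum_powerset_insert he]
    simp only [hins]
    refine (add_le_add (ih hT' g hg) (ih hT' g' hg')).trans ?_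
    refine prod_rpow_add_prod_rpow_le_of_eq_off (fun i => e ∈ T i) hw
      (hT e (mem_insert_self _ _)) (fun i _ => sum_nonneg fun V _ => hg i V)
      (fun i _ => sum_nonneg fun V _ => hg' i V) ?_ ?_ ?_
    · intro i _ hi
      rw [insert_inter_of_mem hi, sum_powerset_insert fun h => he (mem_inter.1 h).1]
      simp only [g', hi, if_true]
    · intro i _ hi
      rw [insert_inter_of_notMem hi]
    · intro i _ hi
      simp only [insert_inter_of_notMem hi, g', hi, if_false]

end Finner

section Resampling

variable {β M : Type*} [DecidableEq β] [AddCommMonoid M] {E C₀ C₁ : Finset β}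

lemma sdiff_union_eq_iff_mem_Icc (hC : Disjoint C₀ C₁) {D S : Finset β} (h₁ : C₁ ⊆ D)
    (h₀ : Disjoint D C₀) : S \ C₀ ∪ C₁ = D ↔ S ∈ Icc (D \ C₁) (D ∪ C₀) := by
  rw [mem_Icc]
  constructor
  · rintro rfl
    exact ⟨by grind, by grind⟩
  · rintro ⟨hl, hu⟩
    have := disjoint_left.1 hC
    have := disjoint_left.1 h₀
    grind

-- Every `D` in the interval is hit by the `2 ^ (#C₀ + #C₁)` sets `S` that differ from it
-- inside `C₀ ∪ C₁` only.
lemma sum_powerset_sdiff_union (h₀ : C₀ ⊆ E) (h₁ : C₁ ⊆ E) (hC : Disjoint C₀ C₁)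
    (f : Finset β → M) :
    ∑ S ∈ E.powerset, f (S \ C₀ ∪ C₁) = 2 ^ (#C₀ + #C₁) • ∑ D ∈ Icc C₁ (E \ C₀), f D := by
  have hmaps : ∀ S ∈ E.powerset, S \ C₀ ∪ C₁ ∈ Icc C₁ (E \ C₀) := fun S hS => by
    rw [mem_powerset] at hS
    refine mem_Icc.2 ⟨subset_union_right, union_subset (sdiff_subset_sdiff hS le_rfl) ?_⟩
    exact subset_sdiff.2 ⟨h₁, hC.symm⟩
  rw [← sum_fiberwise_of_maps_to hmaps, smul_sum]
  refine sum_congr rfl fun D hD => ?_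
  obtain ⟨hD₁, hD⟩ := mem_Icc.1 hD
  obtain ⟨hDE, hD₀⟩ := subset_sdiff.1 hD
  have hfiber : {S ∈ E.powerset | S \ C₀ ∪ C₁ = D} = Icc (D \ C₁) (D ∪ C₀) := by
    ext S
    rw [mem_filter, sdiff_union_eq_iff_mem_Icc hC hD₁ hD₀, mem_powerset]
    exact and_iff_right_of_imp fun hS => (mem_Icc.1 hS).2.trans (union_subset hDE h₀)
  rw [sum_congr hfiber fun S hS =>
      congrArg f ((sdiff_union_eq_iff_mem_Icc hC hD₁ hD₀).2 hS), sum_const,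
    card_Icc_finset (sdiff_subset.trans subset_union_left), card_union_of_disjoint hD₀,
    card_sdiff_of_subset hD₁]
  congr 2
  have := card_le_card hD₁
  omega

lemma card_filter_powerset_sdiff_union (h₀ : C₀ ⊆ E) (h₁ : C₁ ⊆ E) (hC : Disjoint C₀ C₁)
    (p : Finset β → Prop) [DecidablePred p] :
    #{S ∈ E.powerset | p (S \ C₀ ∪ C₁)} = 2 ^ (#C₀ + #C₁) * #{D ∈ Icc C₁ (E \ C₀) | p D} := by
  rw [card_filter, card_filter, ← smul_eq_mul]
  exact sum_powerset_sdiff_union h₀ h₁ hC fun D => if p D then 1 else 0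

lemma two_pow_mul_sum_Icc_le_sum_powerset_of_antitone {C : Finset β} (hC : C ⊆ E)
    {f : Finset β → ℝ} (hf : Antitone f) :
    2 ^ #C * ∑ D ∈ Icc C E, f D ≤ ∑ U ∈ E.powerset, f U := by
  have h := sum_powerset_sdiff_union (empty_subset E) hC (disjoint_empty_left C) f
  simp only [sdiff_empty, card_empty, zero_add, nsmul_eq_mul, Nat.cast_pow, Nat.cast_ofNat] at h
  rw [← h]
  exact sum_le_sum fun U _ => hf subset_union_left

end Resampling

section Layers

/-- The `k`-th layer of the Boolean lattice on `α`: all `k`-element subsets. -/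
abbrev layer (α : Type*) [Fintype α] (k : ℕ) : Finset (Finset α) := powersetCard k univ

variable {α : Type*} [Fintype α]

lemma slice_subset_layer {A : Finset (Finset α)} {k : ℕ} : A # k ⊆ layer α k :=
  subset_powersetCard_univ_iff.2 sized_slice

variable [DecidableEq α]

/-- The part of the `k`-th layer that lies above `b`. -/
def layerAbove (b : Finset α) (k : ℕ) : Finset (Finset α) := {x ∈ layer α k | b ⊆ x}

@[simp]
lemma mem_layerAbove {b x : Finset α} {k : ℕ} : x ∈ layerAbove b k ↔ #x = k ∧ b ⊆ x := by
  rw [layerAbove, mem_filter, mem_powersetCard_univ]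

lemma layerAbove_subset_layer (b : Finset α) (k : ℕ) : layerAbove b k ⊆ layer α k :=
  filter_subset _ _

lemma layer_filter_subset_eq_powersetCard (x : Finset α) (k : ℕ) :
    {b ∈ layer α k | b ⊆ x} = powersetCard k x := by
  ext b
  rw [mem_filter, mem_powersetCard_univ, mem_powersetCard, and_comm]

lemma card_layerAbove (b : Finset α) (j : ℕ) :
    #(layerAbove b (#b + j)) = (Fintype.card α - #b).choose j := by
  rw [← card_compl, ← card_powersetCard]
  refine card_nbij' (· \ b) (· ∪ b) ?_ ?_ ?_ ?_
  · intro x hx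
    obtain ⟨hcard, hbx⟩ := mem_layerAbove.1 hx
    refine mem_powersetCard.2 ⟨fun a ha => mem_compl.2 (mem_sdiff.1 ha).2, ?_⟩
    rw [card_sdiff_of_subset hbx, hcard, Nat.add_sub_cancel_left]
  · intro x hx
    obtain ⟨hxb, hcard⟩ := mem_powersetCard.1 hx
    refine mem_layerAbove.2 ⟨?_, subset_union_right⟩
    rw [card_union_of_disjoint (subset_compl_iff_disjoint_right.1 hxb), hcard, add_comm]
  · intro x hx
    exact sdiff_union_of_subset (mem_layerAbove.1 hx).2
  · intro x hx
    exact union_sdiff_cancel_right (subset_compl_iff_disjoint_right.1 (mem_powersetCard.1 hx).1)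

lemma card_layerAbove_succ (b : Finset α) :
    #(layerAbove b (#b + 1)) = Fintype.card α - #b := by
  rw [card_layerAbove, Nat.choose_one_right]

-- Modulo `b`, such a set is an edge between vertices `a` with `insert a b ∈ J`.
lemma card_layerAbove_two_le_choose_two (b : Finset α) (J : Finset (Finset α)) :
    #{y ∈ layerAbove b (#b + 2) | ∀ x ∈ layerAbove b (#b + 1), x ⊆ y → x ∈ J} ≤
      (#J).choose 2 := by
  let A : Finset α := {a ∈ bᶜ | insert a b ∈ J}
  have hA : #A ≤ #J := card_le_card_of_injOn (insert · b) (fun a ha => (mem_filter.1 ha).2)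
    ((insert_inj_on' b).mono (coe_subset.2 (filter_subset _ _)))
  refine le_trans ?_ (Nat.choose_le_choose 2 hA)
  rw [← card_powersetCard]
  refine card_le_card_of_injOn (· \ b) (fun y hy => ?_) fun y hy y' hy' h => ?_
  · obtain ⟨hy, hJ⟩ := mem_filter.1 hy
    obtain ⟨hcard, hby⟩ := mem_layerAbove.1 hy
    refine mem_powersetCard.2 ⟨fun a ha => ?_, ?_⟩
    · obtain ⟨hay, hab⟩ := mem_sdiff.1 ha
      exact mem_filter.2 ⟨mem_compl.2 hab, hJ _ (mem_layerAbove.2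
        ⟨card_insert_of_notMem hab, subset_insert _ _⟩) (insert_subset hay hby)⟩
    · rw [card_sdiff_of_subset hby, hcard, Nat.add_sub_cancel_left]
  · have hby := (mem_layerAbove.1 (mem_filter.1 hy).1).2
    have hby' := (mem_layerAbove.1 (mem_filter.1 hy').1).2
    rw [← sdiff_union_of_subset hby, ← sdiff_union_of_subset hby']
    exact congrArg (· ∪ b) h

lemma mem_shadow_iff_of_subset_layer {U : Finset (Finset α)} {k : ℕ} (hU : U ⊆ layer α (k + 1))
    {x : Finset α} : x ∈ ∂ U ↔ #x = k ∧ ∃ y ∈ U, x ⊆ y := by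
  rw [mem_shadow_iff_exists_mem_card_add_one]
  constructor
  · rintro ⟨y, hy, hxy, hcard⟩
    have := mem_powersetCard_univ.1 (hU hy)
    exact ⟨by omega, y, hy, hxy⟩
  · rintro ⟨hx, y, hy, hxy⟩
    exact ⟨y, hy, hxy, by rw [mem_powersetCard_univ.1 (hU hy), hx]⟩

end Layers

section ShadowPartition

variable {α : Type*} [DecidableEq α] [Fintype α]

/-- The members of the shadow of `V` that contain `b`. -/
def shadowAbove (b : Finset α) (V : Finset (Finset α)) : Finset (Finset α) := {x ∈ ∂ V | b ⊆ x}

lemma mem_shadowAbove_iff_of_subset_layer {V : Finset (Finset α)} {k : ℕ}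
    (hV : V ⊆ layer α (k + 1)) {b x : Finset α} :
    x ∈ shadowAbove b V ↔ (#x = k ∧ ∃ y ∈ V, x ⊆ y) ∧ b ⊆ x := by
  rw [shadowAbove, mem_filter, mem_shadow_iff_of_subset_layer hV]

lemma shadowAbove_inter_layerAbove {U : Finset (Finset α)} {k : ℕ} (hU : U ⊆ layer α (k + 1))
    (b : Finset α) : shadowAbove b (U ∩ layerAbove b (k + 1)) = {x ∈ ∂ U | b ⊆ x} := by
  ext x
  rw [mem_shadowAbove_iff_of_subset_layer (inter_subset_left.trans hU), mem_filter,
    mem_shadow_iff_of_subset_layer hU]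
  refine and_congr_left fun hbx => and_congr_right fun _ => ⟨?_, ?_⟩
  · rintro ⟨y, hy, hxy⟩
    exact ⟨y, (mem_inter.1 hy).1, hxy⟩
  · rintro ⟨y, hy, hxy⟩
    exact ⟨y, mem_inter.2 ⟨hy, mem_layerAbove.2
      ⟨mem_powersetCard_univ.1 (hU hy), hbx.trans hxy⟩⟩, hxy⟩

lemma sum_card_shadowAbove {U : Finset (Finset α)} {t : ℕ} (hU : U ⊆ layer α (t + 2)) :
    ∑ b ∈ layer α t, #(shadowAbove b (U ∩ layerAbove b (t + 2))) = (t + 1) * #(∂ U) := by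
  simp only [shadowAbove_inter_layerAbove hU]
  have hcount : ∀ x ∈ ∂ U, #{b ∈ layer α t | b ⊆ x} = t + 1 := fun x hx => by
    rw [layer_filter_subset_eq_powersetCard, card_powersetCard,
      ((mem_shadow_iff_of_subset_layer hU).1 hx).1, Nat.choose_succ_self_right]
  calc ∑ b ∈ layer α t, #{x ∈ ∂ U | b ⊆ x} = ∑ x ∈ ∂ U, #{b ∈ layer α t | b ⊆ x} :=
        sum_card_bipartiteAbove_eq_sum_card_bipartiteBelow _
    _ = (t + 1) * #(∂ U) := by rw [sum_congr rfl hcount, sum_const, smul_eq_mul, mul_comm]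

/-- The partition function `∑ 2 ^ (-c #∂U)` over all families `U` of `k`-element sets. -/
def shadowPartition (α : Type*) [DecidableEq α] [Fintype α] (k : ℕ) (c : ℝ) : ℝ :=
  ∑ U ∈ (layer α k).powerset, (2 : ℝ) ^ (-(c * #(∂ U)))

/-- The contribution of `b` to `shadowPartition` after Finner's inequality: the analogous sum over
families of sets of size `#b + 2` containing `b`, counting only the shadow above `b`. -/
def localPartition (b : Finset α) (d : ℝ) : ℝ :=
  ∑ V ∈ (layerAbove b (#b + 2)).powerset, (2 : ℝ) ^ (-(d * #(shadowAbove b V)))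

lemma localPartition_nonneg (b : Finset α) (d : ℝ) : 0 ≤ localPartition b d :=
  sum_nonneg fun _ _ => by positivity

-- Each `x ∈ ∂ U` is seen from `t + 1` of the `b`, and each `y ∈ U` from `(t + 2).choose 2`.
lemma shadowPartition_le_prod_localPartition (t : ℕ) (c : ℝ) :
    shadowPartition α (t + 2) c ≤ ∏ b ∈ layer α t,
      localPartition b (c * (t + 2) / 2) ^ (((t + 2).choose 2 : ℝ)⁻¹) := by
  have hchoose : ((t + 2).choose 2 : ℝ) = (t + 2) * (t + 1) / 2 := by
    rw [Nat.cast_choose_two]; push_cast; ring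
  have hfinner := sum_powerset_prod_rpow_le (s := layer α t)
    (w := fun _ => ((t + 2).choose 2 : ℝ)⁻¹) (fun _ _ => by positivity)
    (fun b => layerAbove b (t + 2)) (layer α (t + 2))
    (fun y hy => by
      have hcount : {b ∈ layer α t | y ∈ layerAbove b (t + 2)} = powersetCard t y := by
        rw [← layer_filter_subset_eq_powersetCard]
        refine filter_congr fun b _ => ?_
        rw [mem_layerAbove, mem_powersetCard_univ.1 hy, eq_self_iff_true, true_and]
      rw [hcount, sum_const, card_powersetCard, mem_powersetCard_univ.1 hy, Nat.choose_symm_add,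
        nsmul_eq_mul, mul_inv_cancel₀ (by rw [hchoose]; positivity)])
    (fun b V => (2 : ℝ) ^ (-(c * (t + 2) / 2 * #(shadowAbove b V)))) (fun _ _ => by positivity)
  refine (sum_le_sum fun U hU => le_of_eq ?_).trans (hfinner.trans_eq ?_)
  · have hcount : ∑ b ∈ layer α t, (#(shadowAbove b (U ∩ layerAbove b (t + 2))) : ℝ) =
        (t + 1) * #(∂ U) := by exact_mod_cast sum_card_shadowAbove (mem_powerset.1 hU)
    simp only [← Real.rpow_mul zero_le_two]
    rw [← Real.rpow_sum_of_pos two_pos, ← sum_mul, sum_neg_distrib, ← mul_sum, hcount, hchoose]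
    congr 1
    field_simp
  · refine prod_congr rfl fun b hb => ?_
    rw [localPartition, mem_powersetCard_univ.1 hb,
      inter_eq_right.2 (layerAbove_subset_layer b (t + 2))]

lemma localPartition_le_sum_card_choose_two (b : Finset α) (d : ℝ) :
    localPartition b d ≤ ∑ J ∈ (layerAbove b (#b + 1)).powerset,
      (2 : ℝ) ^ ((#J).choose 2 - d * #J) := by
  have hlayer : ∀ V ∈ (layerAbove b (#b + 2)).powerset, V ⊆ layer α (#b + 1 + 1) :=
    fun V hV => (mem_powerset.1 hV).trans (layerAbove_subset_layer _ _)
  have hmaps : ∀ V ∈ (layerAbove b (#b + 2)).powerset,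
      shadowAbove b V ∈ (layerAbove b (#b + 1)).powerset := fun V hV => by
    refine mem_powerset.2 fun x hx => ?_
    obtain ⟨⟨hcard, -⟩, hbx⟩ := (mem_shadowAbove_iff_of_subset_layer (hlayer V hV)).1 hx
    exact mem_layerAbove.2 ⟨hcard, hbx⟩
  rw [localPartition, ← sum_fiberwise_of_maps_to hmaps]
  refine sum_le_sum fun J _ => ?_
  have hfiber : {V ∈ (layerAbove b (#b + 2)).powerset | shadowAbove b V = J} ⊆
      {y ∈ layerAbove b (#b + 2) | ∀ x ∈ layerAbove b (#b + 1), x ⊆ y → x ∈ J}.powerset := by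
    intro V hV
    obtain ⟨hVb, rfl⟩ := mem_filter.1 hV
    refine mem_powerset.2 fun y hy => mem_filter.2 ⟨mem_powerset.1 hVb hy, fun x hx hxy => ?_⟩
    obtain ⟨hcard, hbx⟩ := mem_layerAbove.1 hx
    exact (mem_shadowAbove_iff_of_subset_layer (hlayer V hVb)).2 ⟨⟨hcard, y, hy, hxy⟩, hbx⟩
  have hcard : #{V ∈ (layerAbove b (#b + 2)).powerset | shadowAbove b V = J} ≤
      2 ^ (#J).choose 2 := by
    refine (card_le_card hfiber).trans ?_
    rw [card_powerset]
    exact Nat.pow_le_pow_right two_pos (card_layerAbove_two_le_choose_two b J)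
  rw [sum_congr rfl fun V hV => by rw [(mem_filter.1 hV).2], sum_const, nsmul_eq_mul,
    sub_eq_add_neg, Real.rpow_add two_pos, Real.rpow_natCast]
  exact mul_le_mul_of_nonneg_right (by exact_mod_cast hcard) (by positivity)

end ShadowPartition

section LayerBound

/-- An upper bound for the logarithm of `localPartition b (c * k / 2)` in dimension `n`, where
`k = #b + 2` lies above the middle layer and `c = 1 - 1 / (2 * n)`. -/
def localLogBound (n : ℕ) : ℝ := (n + 1) * (2 : ℝ) ^ (-(n : ℝ) / 16)

lemma localLogBound_nonneg (n : ℕ) : 0 ≤ localLogBound n := by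
  unfold localLogBound
  positivity

-- The exponent is convex in `j`, so it is large only for `j` near `0` or near `M`.
lemma two_rpow_choose_two_sub_le {n k M j : ℕ} (hk : n + 2 ≤ 2 * k) (hkn : k ≤ n)
    (hM : M + k = n + 2) (hj : j ≤ M) :
    (2 : ℝ) ^ (j.choose 2 - (1 - 1 / (2 * n : ℝ)) * k / 2 * j) ≤
      ((2 : ℝ) ^ (-(n : ℝ) / 16)) ^ j + ((2 : ℝ) ^ (-(n : ℝ) / 16)) ^ (M - j + 1) := by
  have hn : (1 : ℝ) ≤ n := by exact_mod_cast (show 1 ≤ n by omega)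
  have hkR : (n : ℝ) + 2 ≤ 2 * k := by exact_mod_cast hk
  have hknR : (k : ℝ) ≤ n := by exact_mod_cast hkn
  have hMR : (M : ℝ) + k = n + 2 := by exact_mod_cast hM
  have hjR : (j : ℝ) ≤ M := by exact_mod_cast hj
  set c : ℝ := (1 - 1 / (2 * n : ℝ)) * k
  have hck : (k : ℝ) - 1 / 2 ≤ c := by
    have : 1 / (2 * n : ℝ) * k ≤ 1 / 2 := by
      rw [div_mul_eq_mul_div, div_le_iff₀ (by positivity)]; linarith
    linarith
  have hexp : (j.choose 2 : ℝ) - c / 2 * j = -(j / 2 * (c - j + 1)) := by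
    rw [Nat.cast_choose_two]; ring
  rw [hexp, ← Real.rpow_natCast, ← Real.rpow_natCast, ← Real.rpow_mul zero_le_two,
    ← Real.rpow_mul zero_le_two]
  rcases le_or_gt (2 * j) (k + 1) with h | h
  · have hjk : 2 * (j : ℝ) ≤ k + 1 := by exact_mod_cast h
    refine le_add_of_le_of_nonneg (Real.rpow_le_rpow_of_exponent_le one_le_two ?_) (by positivity)
    have hgap : (n : ℝ) / 8 ≤ c - j + 1 := by linarith
    linarith [mul_le_mul_of_nonneg_left hgap (Nat.cast_nonneg (α := ℝ) j)]
  · have hjk : (k : ℝ) + 1 < 2 * j := by exact_mod_cast h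
    refine le_add_of_nonneg_of_le (by positivity) (Real.rpow_le_rpow_of_exponent_le one_le_two ?_)
    push_cast [Nat.cast_sub hj]
    have hgap : ((M : ℝ) - j + 1) / 2 ≤ c - j + 1 := by linarith
    have := mul_le_mul (show (n : ℝ) / 8 ≤ j / 2 by linarith) hgap (by linarith) (by positivity)
    linarith

lemma sum_powerset_two_rpow_choose_two_sub_le {β : Type*} {n k : ℕ} (hk : n + 2 ≤ 2 * k)
    (hkn : k ≤ n) {X : Finset β} (hX : #X + k = n + 2) :
    ∑ J ∈ X.powerset, (2 : ℝ) ^ ((#J).choose 2 - (1 - 1 / (2 * n : ℝ)) * k / 2 * #J) ≤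
      Real.exp (localLogBound n) := by
  set q : ℝ := (2 : ℝ) ^ (-(n : ℝ) / 16) with hq
  have hq₀ : 0 < q := by positivity
  calc ∑ J ∈ X.powerset, (2 : ℝ) ^ ((#J).choose 2 - (1 - 1 / (2 * n : ℝ)) * k / 2 * #J)
      ≤ ∑ J ∈ X.powerset, (q ^ #J * 1 ^ (#X - #J) + 1 ^ #J * q ^ (#X - #J) * q) := by
        refine sum_le_sum fun J hJ => ?_
        rw [one_pow, one_pow, mul_one, one_mul, ← pow_succ]
        exact two_rpow_choose_two_sub_le hk hkn hX (card_le_card (mem_powerset.1 hJ))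
    _ = (q + 1) ^ (#X + 1) := by
        rw [sum_add_distrib, ← sum_mul, sum_pow_mul_eq_add_pow, sum_pow_mul_eq_add_pow]
        ring
    _ ≤ (q + 1) ^ (n + 1) := pow_le_pow_right₀ (by linarith) (by omega)
    _ ≤ Real.exp q ^ (n + 1) := pow_le_pow_left₀ (by linarith) (Real.add_one_le_exp q) _
    _ = Real.exp (localLogBound n) := by
        rw [← Real.exp_nat_mul, localLogBound, ← hq]
        push_cast
        rfl

variable {α : Type*} [DecidableEq α] [Fintype α]

lemma localPartition_le_exp {n : ℕ} (hn : Fintype.card α = n) {b : Finset α}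
    (hb : n + 2 ≤ 2 * (#b + 2)) (hbn : #b + 2 ≤ n) :
    localPartition b ((1 - 1 / (2 * n : ℝ)) * (#b + 2) / 2) ≤ Real.exp (localLogBound n) := by
  refine (localPartition_le_sum_card_choose_two b _).trans ?_
  have := sum_powerset_two_rpow_choose_two_sub_le (X := layerAbove b (#b + 1)) hb hbn
    (by rw [card_layerAbove_succ, hn]; omega)
  push_cast at this
  exact this

lemma shadowPartition_le_exp {n k : ℕ} (hn : Fintype.card α = n) (hk : n + 2 ≤ 2 * k)
    (hkn : k ≤ n) :
    shadowPartition α k (1 - 1 / (2 * n : ℝ)) ≤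
      Real.exp (localLogBound n * n.choose (n / 2)) := by
  obtain ⟨t, rfl⟩ : ∃ t, k = t + 2 := ⟨k - 2, by omega⟩
  have hroot : ((t + 2).choose 2 : ℝ)⁻¹ ≤ 1 :=
    inv_le_one_of_one_le₀ (by exact_mod_cast Nat.choose_pos (by omega))
  have hfactor : ∀ b ∈ layer α t,
      localPartition b ((1 - 1 / (2 * n : ℝ)) * (t + 2) / 2) ^ (((t + 2).choose 2 : ℝ)⁻¹) ≤
        Real.exp (localLogBound n) := fun b hb => by
    obtain rfl := mem_powersetCard_univ.1 hb
    calc _ ≤ Real.exp (localLogBound n) ^ (((#b + 2).choose 2 : ℝ)⁻¹) :=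
          Real.rpow_le_rpow (localPartition_nonneg _ _) (localPartition_le_exp hn hk hkn)
            (by positivity)
      _ ≤ Real.exp (localLogBound n) := Real.rpow_le_self_of_one_le
          (Real.one_le_exp (localLogBound_nonneg n)) hroot
  calc shadowPartition α (t + 2) (1 - 1 / (2 * n : ℝ))
      ≤ ∏ _b ∈ layer α t, Real.exp (localLogBound n) :=
        (shadowPartition_le_prod_localPartition t _).trans
          (prod_le_prod (fun b _ => Real.rpow_nonneg (localPartition_nonneg _ _) _) hfactor)
    _ = Real.exp (localLogBound n * n.choose t) := by
        rw [prod_const, card_powersetCard, card_univ, hn, mul_comm, Real.exp_nat_mul]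
    _ ≤ Real.exp (localLogBound n * n.choose (n / 2)) := by
        refine Real.exp_le_exp.2 (mul_le_mul_of_nonneg_left ?_ (localLogBound_nonneg n))
        exact_mod_cast Nat.choose_le_middle t n

end LayerBound

section TruncatedDownsets

variable {α : Type*}

/-- The members of `A` of size at least `k`. -/
def truncate (k : ℕ) (A : Finset (Finset α)) : Finset (Finset α) := {x ∈ A | k ≤ #x}

@[simp]
lemma mem_truncate {k : ℕ} {A : Finset (Finset α)} {x : Finset α} :
    x ∈ truncate k A ↔ x ∈ A ∧ k ≤ #x :=
  mem_filter

lemma slice_truncate (k : ℕ) (A : Finset (Finset α)) : (truncate k A) # k = A # k := by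
  ext x
  rw [mem_slice, mem_slice, mem_truncate]
  exact and_congr_left fun h => and_iff_left h.ge

lemma antitone_two_rpow_neg_mul_card_shadow [DecidableEq α] {c : ℝ} (hc : 0 ≤ c) :
    Antitone fun U : Finset (Finset α) => (2 : ℝ) ^ (-(c * #(∂ U))) := fun U V hUV => by
  refine Real.rpow_le_rpow_of_exponent_le one_le_two (neg_le_neg ?_)
  exact mul_le_mul_of_nonneg_left (by exact_mod_cast card_le_card (shadow_mono hUV)) hc

/-- The families of sets of size at least `k` that are closed under passing to subsets of size at
least `k`. -/
def truncatedDownsets (α : Type*) [Fintype α] (k : ℕ) : Finset (Finset (Finset α)) :=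
  {A | ∀ x ∈ A, k ≤ #x ∧ ∀ y ⊆ x, k ≤ #y → y ∈ A}

variable [Fintype α]

lemma mem_truncatedDownsets {k : ℕ} {A : Finset (Finset α)} :
    A ∈ truncatedDownsets α k ↔ ∀ x ∈ A, k ≤ #x ∧ ∀ y ⊆ x, k ≤ #y → y ∈ A := by
  simp only [truncatedDownsets, mem_filter, mem_univ, true_and]

lemma truncate_mem_truncatedDownsets {k l : ℕ} (hkl : k ≤ l) {A : Finset (Finset α)}
    (hA : A ∈ truncatedDownsets α k) : truncate l A ∈ truncatedDownsets α l := by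
  rw [mem_truncatedDownsets] at hA ⊢
  intro x hx
  obtain ⟨hxA, hlx⟩ := mem_truncate.1 hx
  exact ⟨hlx, fun y hyx hly => mem_truncate.2 ⟨(hA x hxA).2 y hyx (hkl.trans hly), hly⟩⟩

/-- The partition function `∑ 2 ^ (-c #∂(A # k))` over truncated downsets `A`, weighted by the
shadow of their bottom layer. -/
def truncatedPartition (α : Type*) [DecidableEq α] [Fintype α] (k : ℕ) (c : ℝ) : ℝ :=
  ∑ A ∈ truncatedDownsets α k, (2 : ℝ) ^ (-(c * #(∂ (A # k))))

variable [DecidableEq α]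

lemma truncatedPartition_nonneg (k : ℕ) (c : ℝ) : 0 ≤ truncatedPartition α k c :=
  sum_nonneg fun _ _ => by positivity

lemma slice_mem_Icc_of_truncate_eq {k : ℕ} {A B : Finset (Finset α)}
    (hA : A ∈ truncatedDownsets α k) (hAB : truncate (k + 1) A = B) :
    A # k ∈ Icc (∂ (B # (k + 1))) (layer α k) := by
  refine mem_Icc.2 ⟨fun x hx => ?_, slice_subset_layer⟩
  obtain ⟨hxk, y, hy, hxy⟩ :=
    (mem_shadow_iff_of_subset_layer slice_subset_layer).1 hx
  rw [← hAB, mem_slice, mem_truncate] at hy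
  exact mem_slice.2 ⟨(mem_truncatedDownsets.1 hA y hy.1.1).2 x hxy hxk.ge, hxk⟩

lemma slice_union_truncate_succ {k : ℕ} {A : Finset (Finset α)}
    (hA : A ∈ truncatedDownsets α k) : A # k ∪ truncate (k + 1) A = A := by
  ext x
  have hk := fun hx => (mem_truncatedDownsets.1 hA x hx).1
  rw [mem_union, mem_slice, mem_truncate, ← and_or_left, and_iff_left_iff_imp]
  exact fun hx => (hk hx).eq_or_lt.imp_left Eq.symm

lemma slice_injOn_truncate_eq (k : ℕ) (B : Finset (Finset α)) :
    Set.InjOn (fun A => A # k)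
      ((truncatedDownsets α k).filter (truncate (k + 1) · = B) : Set (Finset (Finset α))) := by
  intro A hA A' hA' h
  obtain ⟨hA, hAB⟩ := mem_filter.1 (mem_coe.1 hA)
  obtain ⟨hA', hAB'⟩ := mem_filter.1 (mem_coe.1 hA')
  rw [← slice_union_truncate_succ hA, ← slice_union_truncate_succ hA', hAB, hAB']
  exact congrArg (· ∪ B) h

-- The bottom layer of `A` is only constrained to contain the shadow of the layer above it.
lemma truncatedPartition_le_mul_succ {k : ℕ} {c : ℝ} (hc₀ : 0 ≤ c) (hc₁ : c ≤ 1) :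
    truncatedPartition α k c ≤ shadowPartition α k c * truncatedPartition α (k + 1) c := by
  have hmaps : ∀ A ∈ truncatedDownsets α k,
      truncate (k + 1) A ∈ truncatedDownsets α (k + 1) :=
    fun A hA => truncate_mem_truncatedDownsets k.le_succ hA
  unfold truncatedPartition
  rw [← sum_fiberwise_of_maps_to hmaps, mul_sum]
  refine sum_le_sum fun B _ => ?_
  set C := ∂ (B # (k + 1))
  have hCk : C ⊆ layer α k := fun x hx => mem_powersetCard_univ.2
    ((mem_shadow_iff_of_subset_layer slice_subset_layer).1 hx).1
  calc ∑ A ∈ truncatedDownsets α k with truncate (k + 1) A = B, (2 : ℝ) ^ (-(c * #(∂ (A # k))))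
      ≤ ∑ U ∈ Icc C (layer α k), (2 : ℝ) ^ (-(c * #(∂ U))) := by
        rw [← sum_image (f := fun U => (2 : ℝ) ^ (-(c * #(∂ U)))) (slice_injOn_truncate_eq k B)]
        refine sum_le_sum_of_subset_of_nonneg (image_subset_iff.2 fun A hA => ?_)
          fun _ _ _ => by positivity
        exact slice_mem_Icc_of_truncate_eq (mem_filter.1 hA).1 (mem_filter.1 hA).2
    _ ≤ shadowPartition α k c * (2 : ℝ) ^ (-(#C : ℝ)) := by
        rw [Real.rpow_neg zero_le_two, Real.rpow_natCast, ← div_eq_mul_inv,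
          le_div_iff₀ (by positivity), mul_comm]
        exact two_pow_mul_sum_Icc_le_sum_powerset_of_antitone hCk
          (antitone_two_rpow_neg_mul_card_shadow hc₀)
    _ ≤ shadowPartition α k c * (2 : ℝ) ^ (-(c * #C)) := by
        refine mul_le_mul_of_nonneg_left ?_ (sum_nonneg fun _ _ => by positivity)
        refine Real.rpow_le_rpow_of_exponent_le one_le_two (neg_le_neg ?_)
        exact mul_le_of_le_one_left (Nat.cast_nonneg _) hc₁

lemma truncatedPartition_eq_one {k : ℕ} (hk : Fintype.card α < k) (c : ℝ) :
    truncatedPartition α k c = 1 := by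
  have hempty : truncatedDownsets α k = {∅} := by
    ext A
    rw [mem_truncatedDownsets, mem_singleton]
    constructor
    · intro hA
      refine eq_empty_of_forall_notMem fun x hx => ?_
      exact absurd ((hA x hx).1.trans (card_le_univ x)) (not_le.2 hk)
    · rintro rfl x hx
      exact absurd hx (notMem_empty x)
  rw [truncatedPartition, hempty, sum_singleton]
  simp [slice]

lemma truncatedPartition_le_exp_pow {n k : ℕ} (hn : Fintype.card α = n) (hk : n + 2 ≤ 2 * k)
    (hkn : k ≤ n + 1) :
    truncatedPartition α k (1 - 1 / (2 * n : ℝ)) ≤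
      Real.exp (localLogBound n * n.choose (n / 2)) ^ (n + 1 - k) := by
  have hc₀ : 0 ≤ 1 - 1 / (2 * n : ℝ) := by
    rcases Nat.eq_zero_or_pos n with rfl | hpos
    · norm_num
    · have : (1 : ℝ) ≤ n := by exact_mod_cast hpos
      rw [sub_nonneg, div_le_one (by positivity)]
      linarith
  have hc₁ : 1 - 1 / (2 * n : ℝ) ≤ 1 := sub_le_self _ (by positivity)
  induction hkn using Nat.decreasingInduction with
  | self => rw [truncatedPartition_eq_one (by omega), Nat.sub_self, pow_zero]
  | of_succ k hkn ih =>
    refine (truncatedPartition_le_mul_succ hc₀ hc₁).trans ?_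
    rw [show n + 1 - k = n + 1 - (k + 1) + 1 by omega, pow_succ']
    exact mul_le_mul (shadowPartition_le_exp hn hk (by omega)) (ih (by omega))
      (truncatedPartition_nonneg _ _) (by positivity)

end TruncatedDownsets

section SecondMoment

lemma card_filter_lt_sub_mul_sq_le {ι : Type*} (s : Finset ι) (f : ι → ℝ) {a t : ℝ}
    (ht : 0 ≤ t) : #{i ∈ s | f i < a - t} * t ^ 2 ≤ ∑ i ∈ s, (f i - a) ^ 2 := by
  rw [← nsmul_eq_mul, ← sum_const]
  refine le_trans (sum_le_sum fun i hi => ?_)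
    (sum_le_sum_of_subset_of_nonneg (filter_subset _ _) fun _ _ _ => sq_nonneg _)
  rw [← neg_sub, neg_sq]
  exact pow_le_pow_left₀ ht (by linarith [(mem_filter.1 hi).2]) 2

variable {ι β : Type*} [DecidableEq β]

/-- The number of indices `i ∈ G` with `T i ⊆ S`. -/
def containedCount (T : ι → Finset β) (G : Finset ι) (S : Finset β) : ℕ := #{i ∈ G | T i ⊆ S}

lemma card_powerset_filter_superset {E T : Finset β} (hT : T ⊆ E) :
    (#{S ∈ E.powerset | T ⊆ S} : ℝ) = 2 ^ #E / 2 ^ #T := by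
  have hIcc : {S ∈ E.powerset | T ⊆ S} = Icc T E := by
    ext S
    rw [mem_filter, mem_powerset, mem_Icc, and_comm]
  rw [hIcc, card_Icc_finset hT, Nat.cast_pow, Nat.cast_ofNat,
    pow_sub₀ _ two_ne_zero (card_le_card hT), div_eq_mul_inv]

variable {E : Finset β} {T : ι → Finset β} {G : Finset ι} {r d : ℕ}

lemma sum_powerset_containedCount (hTE : ∀ i ∈ G, T i ⊆ E) (hcard : ∀ i ∈ G, #(T i) = r) :
    ∑ S ∈ E.powerset, (containedCount T G S : ℝ) = #G / 2 ^ r * 2 ^ #E := by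
  simp only [containedCount, ← sum_boole]
  rw [sum_comm, sum_congr rfl fun i hi => by
    rw [sum_boole, card_powerset_filter_superset (hTE i hi), hcard i hi], sum_const, nsmul_eq_mul]
  ring

lemma sum_powerset_containedCount_sq (hTE : ∀ i ∈ G, T i ⊆ E) :
    ∑ S ∈ E.powerset, (containedCount T G S : ℝ) ^ 2 =
      (∑ i ∈ G, ∑ j ∈ G, 1 / 2 ^ #(T i ∪ T j)) * 2 ^ #E := by
  simp only [containedCount, ← sum_boole, sq, sum_mul_sum]
  rw [sum_mul, sum_comm]
  refine sum_congr rfl fun i hi => ?_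
  rw [sum_mul, sum_comm]
  refine sum_congr rfl fun j hj => ?_
  rw [one_div_mul_eq_div, ← card_powerset_filter_superset (union_subset (hTE i hi) (hTE j hj)),
    ← sum_boole]
  refine sum_congr rfl fun S _ => ?_
  simp only [union_subset_iff, ite_and, ite_mul, one_mul, zero_mul]

lemma one_div_two_pow_card_union_le {A B : Finset β} (hA : #A = r + 1) (hB : #B = r + 1)
    (hAB : #(A ∩ B) ≤ 1) :
    (1 : ℝ) / 2 ^ #(A ∪ B) ≤ 1 / 2 ^ (r + 1) *
      (1 / 2 ^ (r + 1) + if Disjoint A B then 0 else 1 / 2 ^ r) := by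
  have hunion := card_union_add_card_inter A B
  split_ifs with hdisj
  · rw [card_union_of_disjoint hdisj, hA, hB, pow_add, add_zero, one_div_mul_one_div]
  · calc (1 : ℝ) / 2 ^ #(A ∪ B) ≤ 1 / 2 ^ (r + 1 + r) :=
          one_div_le_one_div_of_le (by positivity) (pow_le_pow_right₀ one_le_two (by omega))
      _ = 1 / 2 ^ (r + 1) * (1 / 2 ^ r) := by rw [pow_add, one_div_mul_one_div]
      _ ≤ _ := by gcongr; exact le_add_of_nonneg_left (by positivity)

lemma sum_one_div_two_pow_card_union_le (hcard : ∀ i ∈ G, #(T i) = r + 1)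
    (hinter : ∀ i ∈ G, ∀ j ∈ G, i ≠ j → #(T i ∩ T j) ≤ 1) {i : ι} (hi : i ∈ G)
    (hdeg : #{j ∈ G | ¬ Disjoint (T i) (T j)} ≤ d) :
    ∑ j ∈ G, (1 : ℝ) / 2 ^ #(T i ∪ T j) ≤
      1 / 2 ^ (r + 1) * (#G / 2 ^ (r + 1) + (1 + d / 2 ^ r)) := by
  have hterm : ∀ j ∈ G, (1 : ℝ) / 2 ^ #(T i ∪ T j) ≤ 1 / 2 ^ (r + 1) *
      (1 / 2 ^ (r + 1) + (if i = j then 1 else 0) +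
        if Disjoint (T i) (T j) then 0 else 1 / 2 ^ r) := fun j hj => by
    by_cases hij : i = j
    · subst hij
      rw [union_self, hcard i hi, if_pos rfl]
      refine le_mul_of_one_le_right (by positivity) ?_
      rw [add_right_comm]
      exact le_add_of_nonneg_left (by positivity)
    · rw [if_neg hij, add_zero]
      exact one_div_two_pow_card_union_le (hcard i hi) (hcard j hj) (hinter i hi j hj hij)
  have hsum : ∑ j ∈ G, (if Disjoint (T i) (T j) then 0 else (1 : ℝ) / 2 ^ r) ≤ d / 2 ^ r := by
    rw [sum_ite, sum_const_zero, zero_add, sum_const, nsmul_eq_mul, mul_one_div]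
    gcongr
  refine (sum_le_sum hterm).trans ?_
  rw [← mul_sum, sum_add_distrib, sum_add_distrib, sum_const, nsmul_eq_mul, sum_ite_eq, if_pos hi,
    mul_one_div, add_assoc]
  gcongr

lemma sum_powerset_containedCount_sub_sq_le (hTE : ∀ i ∈ G, T i ⊆ E)
    (hcard : ∀ i ∈ G, #(T i) = r + 1)
    (hinter : ∀ i ∈ G, ∀ j ∈ G, i ≠ j → #(T i ∩ T j) ≤ 1)
    (hdeg : ∀ i ∈ G, #{j ∈ G | ¬ Disjoint (T i) (T j)} ≤ d) :
    ∑ S ∈ E.powerset, ((containedCount T G S : ℝ) - (#G : ℝ) / 2 ^ (r + 1)) ^ 2 ≤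
      (#G : ℝ) / 2 ^ (r + 1) * (1 + d / 2 ^ r) * 2 ^ #E := by
  set μ : ℝ := #G / 2 ^ (r + 1) with hμ
  have hsq : ∑ S ∈ E.powerset, (containedCount T G S : ℝ) ^ 2 ≤
      (μ * (μ + (1 + d / 2 ^ r))) * 2 ^ #E := by
    rw [sum_powerset_containedCount_sq hTE]
    gcongr
    refine (sum_le_sum fun i hi =>
      sum_one_div_two_pow_card_union_le hcard hinter hi (hdeg i hi)).trans_eq ?_
    rw [sum_const, nsmul_eq_mul, ← mul_assoc, mul_one_div]
  have hconst : ∑ _S ∈ E.powerset, μ ^ 2 = μ ^ 2 * 2 ^ #E := by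
    rw [sum_const, card_powerset, nsmul_eq_mul, Nat.cast_pow, Nat.cast_ofNat, mul_comm]
  calc ∑ S ∈ E.powerset, ((containedCount T G S : ℝ) - μ) ^ 2
      = ∑ S ∈ E.powerset, (containedCount T G S : ℝ) ^ 2 -
          2 * μ * ∑ S ∈ E.powerset, (containedCount T G S : ℝ) + μ ^ 2 * 2 ^ #E := by
        rw [← hconst, mul_sum, ← sum_sub_distrib, ← sum_add_distrib]
        exact sum_congr rfl fun S _ => by ring
    _ ≤ μ * (1 + d / 2 ^ r) * 2 ^ #E := by
        rw [sum_powerset_containedCount hTE hcard, ← hμ]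
        linarith

end SecondMoment

section FacetChebyshev

variable {α : Type*} [DecidableEq α] {m : ℕ}

lemma card_powersetCard_inter_powersetCard_le_one {x y : Finset α} (hx : #x = m + 1)
    (hy : #y = m + 1) (hxy : x ≠ y) : #(x.powersetCard m ∩ y.powersetCard m) ≤ 1 := by
  have hlt : #(x ∩ y) < m + 1 := by
    rw [← hx]
    refine card_lt_card ⟨inter_subset_left, fun h => hxy ?_⟩
    exact eq_of_subset_of_card_le (h.trans inter_subset_right) (by rw [hx, hy])
  have hsub : x.powersetCard m ∩ y.powersetCard m ⊆ (x ∩ y).powersetCard m := fun z hz => by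
    simp only [mem_inter, mem_powersetCard] at hz ⊢
    exact ⟨subset_inter hz.1.1 hz.2.1, hz.1.2⟩
  refine (card_le_card hsub).trans ?_
  rw [card_powersetCard]
  exact (Nat.choose_le_choose m (Nat.lt_succ_iff.1 hlt)).trans_eq (Nat.choose_self m)

variable [Fintype α] {G : Finset (Finset α)}

lemma card_filter_not_disjoint_powersetCard_le (hG : G ⊆ layer α (m + 1)) {x : Finset α}
    (hx : #x = m + 1) :
    #{y ∈ G | ¬ Disjoint (x.powersetCard m) (y.powersetCard m)} ≤
      (m + 1) * (Fintype.card α - m) := by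
  have hsub : {y ∈ G | ¬ Disjoint (x.powersetCard m) (y.powersetCard m)} ⊆
      (x.powersetCard m).biUnion fun z => layerAbove z (m + 1) := fun y hy => by
    obtain ⟨hyG, hxy⟩ := mem_filter.1 hy
    obtain ⟨z, hzx, hzy⟩ := not_disjoint_iff.1 hxy
    exact mem_biUnion.2 ⟨z, hzx, mem_layerAbove.2
      ⟨mem_powersetCard_univ.1 (hG hyG), (mem_powersetCard.1 hzy).1⟩⟩
  have hcard : #(x.powersetCard m) = m + 1 := by
    rw [card_powersetCard, hx, Nat.choose_succ_self_right]
  rw [← hcard]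
  refine (card_le_card hsub).trans (card_biUnion_le_card_mul _ _ _ fun z hz => ?_)
  obtain rfl := (mem_powersetCard.1 hz).2
  rw [card_layerAbove_succ]

lemma succ_mul_le_two_mul_two_pow (m : ℕ) : (m + 1) * m ≤ 2 * 2 ^ m := by
  induction m with
  | zero => simp
  | succ k ih =>
    rcases Nat.lt_or_ge k 2 with h | h
    · interval_cases k <;> norm_num
    · rw [pow_succ]; nlinarith

lemma card_filter_containedCount_powersetCard_lt_mul_le (hα : Fintype.card α = 2 * m)
    (hG : G ⊆ layer α (m + 1)) {ε : ℝ} (hε : 0 ≤ ε) :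
    #{S ∈ (layer α m).powerset |
        (containedCount (powersetCard m) G S : ℝ) < (1 - ε) * ((#G : ℝ) / 2 ^ (m + 1))} *
      (ε * ((#G : ℝ) / 2 ^ (m + 1))) ^ 2 ≤ 3 * ((#G : ℝ) / 2 ^ (m + 1)) * 2 ^ #(layer α m) := by
  have hGm : ∀ x ∈ G, #x = m + 1 := fun x hx => mem_powersetCard_univ.1 (hG hx)
  have hdeg : (m + 1) * (Fintype.card α - m) ≤ 2 * 2 ^ m := by
    rw [hα, two_mul, Nat.add_sub_cancel]
    exact succ_mul_le_two_mul_two_pow m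
  have hvar := sum_powerset_containedCount_sub_sq_le (E := layer α m) (T := powersetCard m)
    (G := G) (r := m) (d := 2 * 2 ^ m)
    (fun x _ => powersetCard_mono (subset_univ x))
    (fun x hx => by rw [card_powersetCard, hGm x hx, Nat.choose_succ_self_right])
    (fun x hx y hy => card_powersetCard_inter_powersetCard_le_one (hGm x hx) (hGm y hy))
    (fun x hx => (card_filter_not_disjoint_powersetCard_le hG (hGm x hx)).trans hdeg)
  rw [one_sub_mul]
  refine (card_filter_lt_sub_mul_sq_le _ _ (by positivity)).trans (hvar.trans_eq ?_)
  push_cast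
  field_simp
  ring

end FacetChebyshev

section Fibres

variable {n m : ℕ} {Δ Δ' D S : Finset (Finset (Fin n))}

lemma mem_allComplexes : Δ ∈ allComplexes n ↔ IsComplex Δ := by
  simp only [allComplexes, mem_filter, mem_univ, true_and]

/-- The faces of `Δ` outside the layer of `m`-sets. -/
def offLayer (m : ℕ) (Δ : Finset (Finset (Fin n))) : Finset (Finset (Fin n)) := {x ∈ Δ | #x ≠ m}

/-- The `m`-sets that every complex agreeing with `Δ` off the layer of `m`-sets contains, being
facets of `(m + 1)`-faces. -/
def forced (m : ℕ) (Δ : Finset (Finset (Fin n))) : Finset (Finset (Fin n)) := ∂ (Δ # (m + 1))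

/-- The `m`-sets that no complex agreeing with `Δ` off the layer of `m`-sets contains, having a
nonempty facet outside `Δ`. -/
def blocked (m : ℕ) (Δ : Finset (Finset (Fin n))) : Finset (Finset (Fin n)) :=
  {x | #x = m ∧ ∃ z ⊆ x, #z + 1 = m ∧ z.Nonempty ∧ z ∉ Δ}

/-- The number of `m`-sets whose membership is determined by the faces off the layer of
`m`-sets. -/
def numConstrained (m : ℕ) (Δ : Finset (Finset (Fin n))) : ℕ := #(blocked m Δ) + #(forced m Δ)

lemma mem_offLayer {x : Finset (Fin n)} : x ∈ offLayer m Δ ↔ x ∈ Δ ∧ #x ≠ m := mem_filter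

lemma mem_forced {x : Finset (Fin n)} :
    x ∈ forced m Δ ↔ #x = m ∧ ∃ y ∈ Δ, #y = m + 1 ∧ x ⊆ y := by
  rw [forced, mem_shadow_iff_of_subset_layer slice_subset_layer]
  simp only [mem_slice, and_assoc]

lemma mem_blocked {x : Finset (Fin n)} :
    x ∈ blocked m Δ ↔ #x = m ∧ ∃ z ⊆ x, #z + 1 = m ∧ z.Nonempty ∧ z ∉ Δ := by
  simp only [blocked, mem_filter, mem_univ, true_and]

lemma forced_subset_layer : forced m Δ ⊆ layer (Fin n) m := fun _ hx =>
  mem_powersetCard_univ.2 (mem_forced.1 hx).1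

lemma blocked_subset_layer : blocked m Δ ⊆ layer (Fin n) m := fun _ hx =>
  mem_powersetCard_univ.2 (mem_blocked.1 hx).1

lemma offLayer_union_slice (m : ℕ) (Δ : Finset (Finset (Fin n))) : offLayer m Δ ∪ Δ # m = Δ := by
  rw [union_comm]
  exact filter_union_filter_not_eq _ Δ

lemma offLayer_offLayer_union (hD : D ⊆ layer (Fin n) m) :
    offLayer m (offLayer m Δ ∪ D) = offLayer m Δ := by
  ext x
  have hxm : x ∈ D → #x = m := fun hx => mem_powersetCard_univ.1 (hD hx)
  simp only [mem_offLayer, mem_union]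
  tauto

lemma slice_offLayer_union (hD : D ⊆ layer (Fin n) m) : (offLayer m Δ ∪ D) # m = D := by
  ext x
  have hxm : x ∈ D → #x = m := fun hx => mem_powersetCard_univ.1 (hD hx)
  simp only [mem_slice, mem_offLayer, mem_union]
  tauto

lemma IsComplex.slice_mem_Icc (hm : 0 < m) (hΔ : IsComplex Δ) :
    Δ # m ∈ Icc (forced m Δ) (layer (Fin n) m \ blocked m Δ) := by
  refine mem_Icc.2 ⟨fun x hx => ?_, subset_sdiff.2 ⟨slice_subset_layer, ?_⟩⟩
  · obtain ⟨hxm, y, hy, -, hxy⟩ := mem_forced.1 hx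
    exact mem_slice.2 ⟨hΔ.2 y hy x (card_pos.1 (by omega)) hxy, hxm⟩
  · refine disjoint_left.2 fun x hx hxb => ?_
    obtain ⟨-, z, hzx, -, hzne, hz⟩ := mem_blocked.1 hxb
    exact hz (hΔ.2 x (mem_slice.1 hx).1 z hzne hzx)

lemma IsComplex.disjoint_blocked_forced (hm : 0 < m) (hΔ : IsComplex Δ) :
    Disjoint (blocked m Δ) (forced m Δ) := by
  obtain ⟨hforced, hblocked⟩ := mem_Icc.1 (hΔ.slice_mem_Icc hm)
  exact ((subset_sdiff.1 hblocked).2.mono_left hforced).symm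

lemma IsComplex.mem_offLayer_union_of_mem_offLayer (hΔ : IsComplex Δ) (hD : forced m Δ ⊆ D)
    {x y : Finset (Fin n)} (hx : x ∈ offLayer m Δ) (hy : y.Nonempty) (hyx : y ⊆ x) :
    y ∈ offLayer m Δ ∪ D := by
  obtain ⟨hxΔ, hxm⟩ := mem_offLayer.1 hx
  have hle := card_le_card hyx
  rw [mem_union, mem_offLayer]
  by_cases hym : #y = m
  · obtain ⟨u, hyu, hux, hu⟩ := exists_subsuperset_card_eq hyx
      (show #y ≤ m + 1 by omega) (show m + 1 ≤ #x by omega)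
    exact .inr (hD (mem_forced.2 ⟨hym, u, hΔ.2 x hxΔ u (hy.mono hyu) hux, hu, hyu⟩))
  · exact .inl ⟨hΔ.2 x hxΔ y hy hyx, hym⟩

lemma IsComplex.mem_offLayer_of_ssubset (hΔ : IsComplex Δ) {x y : Finset (Fin n)} (hxm : #x = m)
    (hx : x ∉ blocked m Δ) (hy : y.Nonempty) (hyx : y ⊂ x) : y ∈ offLayer m Δ := by
  have hlt := card_lt_card hyx
  obtain ⟨z, hyz, hzx, hz⟩ := exists_subsuperset_card_eq hyx.1
    (show #y ≤ m - 1 by omega) (show m - 1 ≤ #x by omega)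
  have hzΔ : z ∈ Δ := by
    by_contra hzΔ
    exact hx (mem_blocked.2 ⟨hxm, z, hzx, by omega, hy.mono hyz, hzΔ⟩)
  exact mem_offLayer.2 ⟨hΔ.2 z hzΔ y hy hyz, by omega⟩

lemma IsComplex.offLayer_union (hm : 0 < m) (hΔ : IsComplex Δ)
    (hD : D ∈ Icc (forced m Δ) (layer (Fin n) m \ blocked m Δ)) :
    IsComplex (offLayer m Δ ∪ D) := by
  obtain ⟨hforced, hsub⟩ := mem_Icc.1 hD
  obtain ⟨hlayer, hblocked⟩ := subset_sdiff.1 hsub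
  refine ⟨fun x hx => ?_, fun x hx y hy hyx => ?_⟩
  · rcases mem_union.1 hx with hx | hx
    · exact hΔ.1 x (mem_offLayer.1 hx).1
    · exact card_pos.1 (by rwa [mem_powersetCard_univ.1 (hlayer hx)])
  · rcases mem_union.1 hx with hx | hx
    · exact hΔ.mem_offLayer_union_of_mem_offLayer hforced hx hy hyx
    · rcases hyx.eq_or_ssubset with rfl | hss
      · exact mem_union_right _ hx
      · exact mem_union_left _ (hΔ.mem_offLayer_of_ssubset (mem_powersetCard_univ.1 (hlayer hx))
          (disjoint_left.1 hblocked hx) hy hss)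

lemma forced_congr (h : offLayer m Δ = offLayer m Δ') : forced m Δ = forced m Δ' := by
  ext x
  simp only [mem_forced]
  refine and_congr_right fun _ => exists_congr fun y => ?_
  have := Finset.ext_iff.1 h y
  simp only [mem_offLayer] at this
  grind

lemma blocked_congr (h : offLayer m Δ = offLayer m Δ') : blocked m Δ = blocked m Δ' := by
  ext x
  simp only [mem_blocked]
  refine and_congr_right fun _ => exists_congr fun z => ?_
  have := Finset.ext_iff.1 h z
  simp only [mem_offLayer] at this
  grind

lemma numConstrained_congr (h : offLayer m Δ = offLayer m Δ') :
    numConstrained m Δ = numConstrained m Δ' := by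
  rw [numConstrained, numConstrained, forced_congr h, blocked_congr h]

/-- The complexes agreeing with `Δ` off the layer of `m`-sets. -/
def fibre (m : ℕ) (Δ : Finset (Finset (Fin n))) : Finset (Finset (Finset (Fin n))) :=
  {Δ' ∈ allComplexes n | offLayer m Δ' = offLayer m Δ}

lemma mem_fibre : Δ' ∈ fibre m Δ ↔ IsComplex Δ' ∧ offLayer m Δ' = offLayer m Δ := by
  rw [fibre, mem_filter, mem_allComplexes]

lemma card_filter_fibre (hm : 0 < m) (hΔ : IsComplex Δ)
    (p : Finset (Finset (Fin n)) → Prop) :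
    #{Δ' ∈ fibre m Δ | p Δ'} =
      #{D ∈ Icc (forced m Δ) (layer (Fin n) m \ blocked m Δ) | p (offLayer m Δ ∪ D)} := by
  refine card_nbij' (fun Δ' => Δ' # m) (fun D => offLayer m Δ ∪ D)
    (fun Δ' h => ?_) (fun D h => ?_) (fun Δ' h => ?_) (fun D h => ?_)
  all_goals obtain ⟨h, hp⟩ := mem_filter.1 h
  · obtain ⟨hΔ', heq⟩ := mem_fibre.1 h
    rw [mem_coe, mem_filter, ← heq, offLayer_union_slice, ← forced_congr heq, ← blocked_congr heq]
    exact ⟨hΔ'.slice_mem_Icc hm, hp⟩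
  · have hlayer := (subset_sdiff.1 (mem_Icc.1 h).2).1
    exact mem_filter.2 ⟨mem_fibre.2 ⟨hΔ.offLayer_union hm h, offLayer_offLayer_union hlayer⟩, hp⟩
  · simp only [← (mem_fibre.1 h).2, offLayer_union_slice]
  · exact slice_offLayer_union (subset_sdiff.1 (mem_Icc.1 h).2).1

/-- The complex agreeing with `Δ` off the layer of `m`-sets whose `m`-faces are those of `S`, up to
the constraints; a uniform `S` yields a uniform element of `fibre m Δ`. -/
def resample (m : ℕ) (Δ S : Finset (Finset (Fin n))) : Finset (Finset (Fin n)) :=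
  offLayer m Δ ∪ (S \ blocked m Δ ∪ forced m Δ)

lemma card_filter_resample (hm : 0 < m) (hΔ : IsComplex Δ)
    (p : Finset (Finset (Fin n)) → Prop) :
    #{S ∈ (layer (Fin n) m).powerset | p (resample m Δ S)} =
      2 ^ numConstrained m Δ * #{Δ' ∈ fibre m Δ | p Δ'} := by
  rw [card_filter_fibre hm hΔ]
  exact card_filter_powerset_sdiff_union blocked_subset_layer forced_subset_layer
    (hΔ.disjoint_blocked_forced hm) fun D => p (offLayer m Δ ∪ D)

lemma two_pow_numConstrained_mul_card_fibre (hm : 0 < m) (hΔ : IsComplex Δ) :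
    2 ^ numConstrained m Δ * #(fibre m Δ) = 2 ^ n.choose m := by
  simpa using (card_filter_resample hm hΔ fun _ => True).symm

lemma two_pow_choose_le_card_allComplexes (hm : 0 < m) :
    2 ^ n.choose m ≤ #(allComplexes n) := by
  set Δ : Finset (Finset (Fin n)) := {x | x.Nonempty ∧ #x < m} with hΔ
  have hmem : ∀ x, x ∈ Δ ↔ x.Nonempty ∧ #x < m := fun x => by simp [hΔ]
  have hcomplex : IsComplex Δ := ⟨fun x hx => ((hmem x).1 hx).1, fun x hx y hy hyx =>
    (hmem y).2 ⟨hy, (card_le_card hyx).trans_lt ((hmem x).1 hx).2⟩⟩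
  have hforced : forced m Δ = ∅ := eq_empty_of_forall_notMem fun x hx => by
    obtain ⟨-, y, hy, hym, -⟩ := mem_forced.1 hx
    have := ((hmem y).1 hy).2
    omega
  have hblocked : blocked m Δ = ∅ := eq_empty_of_forall_notMem fun x hx => by
    obtain ⟨-, z, -, hzm, hzne, hz⟩ := mem_blocked.1 hx
    exact hz ((hmem z).2 ⟨hzne, by omega⟩)
  have hcard := two_pow_numConstrained_mul_card_fibre hm hcomplex
  rw [numConstrained, hforced, hblocked, card_empty, add_zero, pow_zero, one_mul] at hcard
  rw [← hcard]
  exact card_le_card (filter_subset _ _)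

end Fibres

section Holes

variable {n m : ℕ} {Δ S : Finset (Finset (Fin n))}

/-- The holes of `Δ` with `m + 1` vertices. -/
def holes (m : ℕ) (Δ : Finset (Finset (Fin n))) : Finset (Finset (Fin n)) := {x | IsHole Δ m x}

/-- The `(m + 1)`-sets that can be holes of a complex agreeing with `Δ` off the layer of `m`-sets:
the nonfaces without blocked facets. -/
def holeCandidates (m : ℕ) (Δ : Finset (Finset (Fin n))) : Finset (Finset (Fin n)) :=
  {x ∈ layer (Fin n) (m + 1) | x ∉ Δ ∧ Disjoint (x.powersetCard m) (blocked m Δ)}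

lemma containedCount_holeCandidates_le_card_holes (hS : S ⊆ layer (Fin n) m) :
    containedCount (powersetCard m) (holeCandidates m Δ) S ≤ #(holes m (resample m Δ S)) := by
  refine card_le_card fun x hx => ?_
  obtain ⟨hx, hxS⟩ := mem_filter.1 hx
  obtain ⟨hxm, hxΔ, hxb⟩ := mem_filter.1 hx
  rw [mem_powersetCard_univ] at hxm
  refine mem_filter.2 ⟨mem_univ x, hxm, fun hxR => ?_, fun y hyx hym => ?_⟩
  · have hlayer : S \ blocked m Δ ∪ forced m Δ ⊆ layer (Fin n) m :=
      union_subset (sdiff_subset.trans hS) forced_subset_layer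
    rcases mem_union.1 hxR with hxR | hxR
    · exact hxΔ (mem_offLayer.1 hxR).1
    · have := mem_powersetCard_univ.1 (hlayer hxR)
      omega
  · have hy : y ∈ x.powersetCard m := mem_powersetCard.2 ⟨hyx, hym⟩
    exact mem_union_right _ (mem_union_left _ (mem_sdiff.2 ⟨hxS hy, disjoint_left.1 hxb hy⟩))

lemma choose_succ_le_card_holeCandidates_add (m : ℕ) (Δ : Finset (Finset (Fin n))) :
    n.choose (m + 1) ≤ #(holeCandidates m Δ) + numConstrained m Δ * (n - m) := by
  have hcover : layer (Fin n) (m + 1) ⊆ holeCandidates m Δ ∪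
      (blocked m Δ ∪ forced m Δ).biUnion fun y => layerAbove y (m + 1) := fun x hx => by
    have hxm := mem_powersetCard_univ.1 hx
    rw [mem_union, or_iff_not_imp_left]
    intro hxc
    simp only [holeCandidates, mem_filter, hx, true_and, not_and_or, not_not] at hxc
    rcases hxc with hxΔ | hxb
    · obtain ⟨y, hyx, hym⟩ := exists_subset_card_eq (show m ≤ #x by omega)
      exact mem_biUnion.2 ⟨y, mem_union_right _ (mem_forced.2 ⟨hym, x, hxΔ, hxm, hyx⟩),
        mem_layerAbove.2 ⟨hxm, hyx⟩⟩
    · obtain ⟨y, hyx, hyb⟩ := not_disjoint_iff.1 hxb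
      exact mem_biUnion.2 ⟨y, mem_union_left _ hyb,
        mem_layerAbove.2 ⟨hxm, (mem_powersetCard.1 hyx).1⟩⟩
  have hdegree : ∀ y ∈ blocked m Δ ∪ forced m Δ, #(layerAbove y (m + 1)) ≤ n - m := fun y hy => by
    obtain rfl := mem_powersetCard_univ.1 (union_subset blocked_subset_layer forced_subset_layer hy)
    rw [card_layerAbove_succ, Fintype.card_fin]
  calc n.choose (m + 1) = #(layer (Fin n) (m + 1)) := by
        rw [card_powersetCard, card_univ, Fintype.card_fin]
    _ ≤ #(holeCandidates m Δ) + #(blocked m Δ ∪ forced m Δ) * (n - m) :=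
        (card_le_card hcover).trans <| (card_union_le _ _).trans <|
          Nat.add_le_add_left (card_biUnion_le_card_mul _ _ _ hdegree) _
    _ ≤ _ := by gcongr; exact card_union_le _ _

end Holes

section AlexanderDual

variable {n m k : ℕ} {Δ Δ' : Finset (Finset (Fin n))}

/-- The Alexander dual of `Δ`: the complements of the nonempty nonfaces. -/
def alexanderDual (Δ : Finset (Finset (Fin n))) : Finset (Finset (Fin n)) :=
  {w | wᶜ.Nonempty ∧ wᶜ ∉ Δ}

lemma mem_alexanderDual {w : Finset (Fin n)} :
    w ∈ alexanderDual Δ ↔ wᶜ.Nonempty ∧ wᶜ ∉ Δ := by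
  simp only [alexanderDual, mem_filter, mem_univ, true_and]

lemma IsComplex.truncate_mem_truncatedDownsets (hΔ : IsComplex Δ) (hk : 0 < k) :
    truncate k Δ ∈ truncatedDownsets (Fin n) k := by
  refine mem_truncatedDownsets.2 fun x hx => ?_
  obtain ⟨hxΔ, hkx⟩ := mem_truncate.1 hx
  exact ⟨hkx, fun y hyx hky =>
    mem_truncate.2 ⟨hΔ.2 x hxΔ y (card_pos.1 (hk.trans_le hky)) hyx, hky⟩⟩

lemma IsComplex.truncate_alexanderDual_mem_truncatedDownsets (hΔ : IsComplex Δ) :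
    truncate k (alexanderDual Δ) ∈ truncatedDownsets (Fin n) k := by
  refine mem_truncatedDownsets.2 fun x hx => ?_
  obtain ⟨hxΔ, hkx⟩ := mem_truncate.1 hx
  obtain ⟨hne, hxΔ⟩ := mem_alexanderDual.1 hxΔ
  refine ⟨hkx, fun y hyx hky => mem_truncate.2 ⟨mem_alexanderDual.2 ⟨?_, fun hy => hxΔ ?_⟩, hky⟩⟩
  · exact hne.mono (compl_subset_compl.2 hyx)
  · exact hΔ.2 _ hy _ hne (compl_subset_compl.2 hyx)

lemma card_blocked (hn : k + m = n) : #(blocked m Δ) = #(∂ ((alexanderDual Δ) # (k + 1))) := by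
  have hcompl : ∀ w : Finset (Fin n), #w + #wᶜ = k + m := fun w => by
    rw [card_add_card_compl, Fintype.card_fin, hn]
  have hcompls : (∂ ((alexanderDual Δ) # (k + 1)))ᶜˢ = blocked m Δ := by
    ext x
    rw [mem_compls, mem_shadow_iff_of_subset_layer slice_subset_layer, mem_blocked]
    have hx := hcompl x
    refine and_congr (by omega) ⟨?_, ?_⟩
    · rintro ⟨w, hw, hxw⟩
      rw [mem_slice, mem_alexanderDual] at hw
      have := hcompl w
      exact ⟨wᶜ, compl_le_of_compl_le hxw, by omega, hw.1⟩
    · rintro ⟨z, hzx, hz, hz'⟩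
      have := hcompl z
      refine ⟨zᶜ, ?_, compl_subset_compl.2 hzx⟩
      rw [mem_slice, mem_alexanderDual, compl_compl]
      exact ⟨hz', by omega⟩
  rw [← hcompls, card_compls]

lemma offLayer_eq_of_truncate_eq (hn : k + m = n) (hΔ : IsComplex Δ) (hΔ' : IsComplex Δ')
    (hup : truncate (m + 1) Δ = truncate (m + 1) Δ')
    (hdual : truncate (k + 1) (alexanderDual Δ) = truncate (k + 1) (alexanderDual Δ')) :
    offLayer m Δ = offLayer m Δ' := by
  ext x
  have hcard : #x + #xᶜ = k + m := by rw [card_add_card_compl, Fintype.card_fin, hn]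
  rw [mem_offLayer, mem_offLayer, and_congr_left_iff]
  intro hxm
  rcases x.eq_empty_or_nonempty with rfl | hne
  · exact iff_of_false (fun h => not_nonempty_empty (hΔ.1 _ h))
      fun h => not_nonempty_empty (hΔ'.1 _ h)
  rcases hxm.lt_or_gt with hlt | hgt
  · have hx := Finset.ext_iff.1 hdual xᶜ
    simp only [mem_truncate, mem_alexanderDual, compl_compl, hne, true_and,
      show k + 1 ≤ #xᶜ by omega, and_true] at hx
    exact not_iff_not.1 hx
  · have hx := Finset.ext_iff.1 hup x
    simpa only [mem_truncate, Nat.succ_le_iff.2 hgt, and_true] using hx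

end AlexanderDual

section UniformProb

variable {n : ℕ}

lemma card_allComplexes_pos (n : ℕ) : 0 < #(allComplexes n) :=
  (Nat.two_pow_pos _).trans_le (two_pow_choose_le_card_allComplexes one_pos)

lemma uniformProb_eq_div (p : Finset (Finset (Fin n)) → Prop) [DecidablePred p] :
    uniformProb n p = (#{Δ ∈ allComplexes n | p Δ} : ℝ) / #(allComplexes n) := by
  rw [uniformProb, filter_congr_decidable]

lemma uniformProb_le_one (p : Finset (Finset (Fin n)) → Prop) : uniformProb n p ≤ 1 :=
  div_le_one_of_le₀ (Nat.cast_le.2 (card_le_card (filter_subset _ _))) (Nat.cast_nonneg _)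

lemma uniformProb_mono {p q : Finset (Finset (Fin n)) → Prop} (h : ∀ Δ, p Δ → q Δ) :
    uniformProb n p ≤ uniformProb n q :=
  div_le_div_of_nonneg_right (Nat.cast_le.2 (card_le_card (monotone_filter_right _ fun Δ _ => h Δ)))
    (Nat.cast_nonneg _)

lemma one_le_uniformProb_add_add {p q r : Finset (Finset (Fin n)) → Prop}
    (h : ∀ Δ, p Δ ∨ q Δ ∨ r Δ) : 1 ≤ uniformProb n p + (uniformProb n q + uniformProb n r) := by
  rw [uniformProb, uniformProb, uniformProb, ← add_div, ← add_div,
    one_le_div (Nat.cast_pos.2 (card_allComplexes_pos n))]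
  have hcover : allComplexes n ⊆ {Δ ∈ allComplexes n | p Δ} ∪
      ({Δ ∈ allComplexes n | q Δ} ∪ {Δ ∈ allComplexes n | r Δ}) := fun Δ hΔ => by
    simpa only [mem_union, mem_filter, hΔ, true_and] using h Δ
  exact_mod_cast (card_le_card hcover).trans ((card_union_le _ _).trans
    (Nat.add_le_add_left (card_union_le _ _) _))

lemma uniformProb_lt_mul_two_rpow_le (f : Finset (Finset (Fin n)) → ℝ) {θ : ℝ} (hθ : 0 ≤ θ)
    (L : ℝ) : uniformProb n (fun Δ => L < f Δ) * 2 ^ (θ * L) ≤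
      (∑ Δ ∈ allComplexes n, (2 : ℝ) ^ (θ * f Δ)) / #(allComplexes n) := by
  rw [uniformProb, div_mul_eq_mul_div, ← nsmul_eq_mul, ← sum_const]
  refine div_le_div_of_nonneg_right ((sum_le_sum fun Δ hΔ => ?_).trans
    (sum_le_sum_of_subset_of_nonneg (filter_subset _ _) fun _ _ _ => by positivity))
    (Nat.cast_nonneg _)
  exact Real.rpow_le_rpow_of_exponent_le one_le_two
    (mul_le_mul_of_nonneg_left (mem_filter.1 hΔ).2.le hθ)

end UniformProb

section ConstrainedSets

variable {n m k : ℕ} {Δ : Finset (Finset (Fin n))}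

lemma numConstrained_eq (hn : k + m = n) : numConstrained m Δ =
    #(∂ ((truncate (k + 1) (alexanderDual Δ)) # (k + 1))) +
      #(∂ ((truncate (m + 1) Δ) # (m + 1))) := by
  rw [slice_truncate, slice_truncate, numConstrained, card_blocked hn, forced]

lemma two_pow_mul_card_filter_truncate_eq_le (hn : k + m = n) (hm : 0 < m)
    (A B : Finset (Finset (Fin n))) :
    2 ^ (#(∂ (B # (k + 1))) + #(∂ (A # (m + 1)))) * #{Δ ∈ allComplexes n |
      (truncate (m + 1) Δ, truncate (k + 1) (alexanderDual Δ)) = (A, B)} ≤ 2 ^ n.choose m := by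
  rcases eq_empty_or_nonempty {Δ ∈ allComplexes n |
    (truncate (m + 1) Δ, truncate (k + 1) (alexanderDual Δ)) = (A, B)} with hempty | ⟨Δ, hΔ⟩
  · rw [hempty, card_empty, mul_zero]
    exact Nat.zero_le _
  · obtain ⟨hmem, hAB⟩ := mem_filter.1 hΔ
    rw [mem_allComplexes] at hmem
    obtain ⟨rfl, rfl⟩ := Prod.mk.inj hAB
    rw [← numConstrained_eq hn, ← two_pow_numConstrained_mul_card_fibre hm hmem]
    refine Nat.mul_le_mul_left _ (card_le_card fun Δ' hΔ' => ?_)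
    obtain ⟨hΔ', heq⟩ := mem_filter.1 hΔ'
    obtain ⟨hup, hdual⟩ := Prod.mk.inj heq
    rw [mem_allComplexes] at hΔ'
    exact mem_fibre.2 ⟨hΔ', offLayer_eq_of_truncate_eq hn hΔ' hmem hup hdual⟩

lemma sum_two_rpow_numConstrained_le (hn : k + m = n) (hm : 0 < m) (θ : ℝ) :
    ∑ Δ ∈ allComplexes n, (2 : ℝ) ^ (θ * numConstrained m Δ) ≤
      2 ^ n.choose m * (truncatedPartition (Fin n) (m + 1) (1 - θ) *
        truncatedPartition (Fin n) (k + 1) (1 - θ)) := by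
  have hmaps : ∀ Δ ∈ allComplexes n,
      (truncate (m + 1) Δ, truncate (k + 1) (alexanderDual Δ)) ∈
        truncatedDownsets (Fin n) (m + 1) ×ˢ truncatedDownsets (Fin n) (k + 1) := fun Δ hΔ => by
    rw [mem_allComplexes] at hΔ
    exact mem_product.2 ⟨hΔ.truncate_mem_truncatedDownsets m.succ_pos,
      hΔ.truncate_alexanderDual_mem_truncatedDownsets⟩
  rw [truncatedPartition, truncatedPartition, sum_mul_sum, ← sum_product',
    ← sum_fiberwise_of_maps_to hmaps, mul_sum]
  refine sum_le_sum fun ⟨A, B⟩ _ => ?_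
  set F := {Δ ∈ allComplexes n |
    (truncate (m + 1) Δ, truncate (k + 1) (alexanderDual Δ)) = (A, B)}
  set a := #(∂ (B # (k + 1))) + #(∂ (A # (m + 1))) with ha
  have hcard : (2 : ℝ) ^ a * #F ≤ 2 ^ n.choose m := by
    exact_mod_cast two_pow_mul_card_filter_truncate_eq_le hn hm A B
  have hterm : ∀ Δ ∈ F, (2 : ℝ) ^ (θ * numConstrained m Δ) = 2 ^ (θ * a) := fun Δ hΔ => by
    obtain ⟨rfl, rfl⟩ := Prod.mk.inj (mem_filter.1 hΔ).2
    rw [numConstrained_eq hn]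
  calc ∑ Δ ∈ F, (2 : ℝ) ^ (θ * numConstrained m Δ) = #F * 2 ^ (θ * a) := by
        rw [sum_congr rfl hterm, sum_const, nsmul_eq_mul]
    _ = 2 ^ a * #F * 2 ^ (-((1 - θ) * a)) := by
        rw [mul_right_comm, mul_comm, ← Real.rpow_natCast, ← Real.rpow_add two_pos]
        ring_nf
    _ ≤ 2 ^ n.choose m * 2 ^ (-((1 - θ) * a)) := by gcongr
    _ = _ := by
        rw [← Real.rpow_add two_pos, ha]
        push_cast
        ring_nf

lemma uniformProb_lt_numConstrained_le (hm : 0 < m) (L : ℝ) :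
    uniformProb (2 * m) (fun Δ => L < numConstrained m Δ) ≤ 2 ^ (-(L / (4 * m))) *
      Real.exp (localLogBound (2 * m) * (2 * m).choose m) ^ (2 * m) := by
  set b := Real.exp (localLogBound (2 * m) * (2 * m).choose m)
  set θ : ℝ := 1 / (2 * (2 * m : ℕ)) with hθ
  have hpartition : truncatedPartition (Fin (2 * m)) (m + 1) (1 - θ) ≤ b ^ m := by
    have := truncatedPartition_le_exp_pow (k := m + 1) (Fintype.card_fin (2 * m)) (by omega)
      (by omega)
    rwa [Nat.mul_div_cancel_left _ two_pos, show 2 * m + 1 - (m + 1) = m by omega] at this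
  have hmoment : (∑ Δ ∈ allComplexes (2 * m), (2 : ℝ) ^ (θ * numConstrained m Δ)) /
      #(allComplexes (2 * m)) ≤ b ^ (2 * m) := by
    rw [div_le_iff₀ (Nat.cast_pos.2 (card_allComplexes_pos _))]
    refine (sum_two_rpow_numConstrained_le (two_mul m).symm hm θ).trans ?_
    rw [pow_mul', sq, mul_comm (b ^ m * b ^ m)]
    have := truncatedPartition_nonneg (α := Fin (2 * m)) (m + 1) (1 - θ)
    gcongr
    exact_mod_cast two_pow_choose_le_card_allComplexes hm
  have hexp : (2 : ℝ) ^ (-(L / (4 * m))) = (2 ^ (θ * L))⁻¹ := by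
    rw [← Real.rpow_neg zero_le_two, hθ]
    push_cast
    ring_nf
  rw [hexp, inv_mul_eq_div, le_div_iff₀ (by positivity)]
  exact (uniformProb_lt_mul_two_rpow_le _ (by positivity) L).trans hmoment

end ConstrainedSets

section FewHoles

variable {n m : ℕ}

lemma uniformProb_le_of_fibre {p : Finset (Finset (Fin n)) → Prop} [DecidablePred p]
    {c : ℝ} (h : ∀ Δ, IsComplex Δ → (#{Δ' ∈ fibre m Δ | p Δ'} : ℝ) ≤ c * #(fibre m Δ)) :
    uniformProb n p ≤ c := by
  have hmaps : ∀ Δ ∈ allComplexes n, offLayer m Δ ∈ (allComplexes n).image (offLayer m) :=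
    fun Δ hΔ => mem_image_of_mem _ hΔ
  rw [uniformProb_eq_div, div_le_iff₀ (Nat.cast_pos.2 (card_allComplexes_pos n)),
    card_eq_sum_card_fiberwise fun Δ hΔ => hmaps Δ (mem_filter.1 hΔ).1,
    card_eq_sum_card_fiberwise hmaps, Nat.cast_sum, Nat.cast_sum, mul_sum]
  refine sum_le_sum fun R hR => ?_
  obtain ⟨Δ, hΔ, rfl⟩ := mem_image.1 hR
  rw [filter_comm]
  exact h Δ (mem_allComplexes.1 hΔ)

variable {Δ : Finset (Finset (Fin (2 * m)))} {L μ ε : ℝ}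

lemma le_card_holeCandidates_div (hμL : μ * 2 ^ (m + 1) ≤ (2 * m).choose (m + 1) - L * m)
    (hL : numConstrained m Δ ≤ L) : μ ≤ (#(holeCandidates m Δ) : ℝ) / 2 ^ (m + 1) := by
  have hcard : ((2 * m).choose (m + 1) : ℝ) ≤
      #(holeCandidates m Δ) + numConstrained m Δ * m := by
    have := choose_succ_le_card_holeCandidates_add m Δ
    rw [show 2 * m - m = m by omega] at this
    exact_mod_cast this
  rw [le_div_iff₀ (by positivity)]
  have := mul_le_mul_of_nonneg_right hL (Nat.cast_nonneg (α := ℝ) m)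
  linarith

lemma card_filter_fibre_card_holes_lt_le (hm : 0 < m) (hΔ : IsComplex Δ) (hε : 0 < ε)
    (hε₁ : ε ≤ 1) (hμ : 0 < μ) (hμΔ : μ ≤ (#(holeCandidates m Δ) : ℝ) / 2 ^ (m + 1)) :
    (#{Δ' ∈ fibre m Δ | (#(holes m Δ') : ℝ) < (1 - ε) * μ} : ℝ) ≤
      3 / (ε ^ 2 * μ) * #(fibre m Δ) := by
  set ν : ℝ := (#(holeCandidates m Δ) : ℝ) / 2 ^ (m + 1)
  have hν₀ : 0 < ν := hμ.trans_le hμΔ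
  set X := {S ∈ (layer (Fin (2 * m)) m).powerset |
    (containedCount (powersetCard m) (holeCandidates m Δ) S : ℝ) < (1 - ε) * ν}
  have hchebyshev : #X * (ε * ν) ^ 2 ≤ 3 * ν * 2 ^ (2 * m).choose m := by
    have := card_filter_containedCount_powersetCard_lt_mul_le (Fintype.card_fin (2 * m))
      (filter_subset _ _ : holeCandidates m Δ ⊆ layer (Fin (2 * m)) (m + 1)) hε.le
    rwa [card_powersetCard, card_univ, Fintype.card_fin] at this
  have hfew : 2 ^ numConstrained m Δ * #{Δ' ∈ fibre m Δ | (#(holes m Δ') : ℝ) < (1 - ε) * μ} ≤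
      #X := by
    rw [← card_filter_resample hm hΔ]
    refine card_le_card fun S hS => ?_
    obtain ⟨hS, hlt⟩ := mem_filter.1 hS
    refine mem_filter.2 ⟨hS, lt_of_le_of_lt (Nat.cast_le.2
      (containedCount_holeCandidates_le_card_holes (mem_powerset.1 hS))) (hlt.trans_le ?_)⟩
    exact mul_le_mul_of_nonneg_left hμΔ (sub_nonneg.2 hε₁)
  have hfibre : (2 : ℝ) ^ numConstrained m Δ * #(fibre m Δ) = 2 ^ (2 * m).choose m := by
    exact_mod_cast two_pow_numConstrained_mul_card_fibre hm hΔ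
  have hX_le : (#X : ℝ) ≤ 3 / (ε ^ 2 * μ) * 2 ^ (2 * m).choose m := calc
    (#X : ℝ) ≤ 3 / (ε ^ 2 * ν) * 2 ^ (2 * m).choose m := by
      rw [← le_div_iff₀ (by positivity)] at hchebyshev
      refine hchebyshev.trans_eq ?_
      field_simp
    _ ≤ _ := by gcongr
  refine le_of_mul_le_mul_left ?_ (show (0 : ℝ) < 2 ^ numConstrained m Δ by positivity)
  calc (2 : ℝ) ^ numConstrained m Δ * _ ≤ #X := by exact_mod_cast hfew
    _ ≤ 3 / (ε ^ 2 * μ) * (2 ^ numConstrained m Δ * #(fibre m Δ)) := hfibre ▸ hX_le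
    _ = _ := mul_left_comm _ _ _

lemma uniformProb_numConstrained_le_and_card_holes_lt_le (hm : 0 < m) (hε : 0 < ε) (hε₁ : ε ≤ 1)
    (hμ : 0 < μ) (hμL : μ * 2 ^ (m + 1) ≤ (2 * m).choose (m + 1) - L * m) :
    uniformProb (2 * m) (fun Δ =>
      numConstrained m Δ ≤ L ∧ (#(holes m Δ) : ℝ) < (1 - ε) * μ) ≤ 3 / (ε ^ 2 * μ) := by
  refine uniformProb_le_of_fibre (m := m) fun Δ hΔ => ?_
  by_cases hL : numConstrained m Δ ≤ L
  · refine le_trans (Nat.cast_le.2 (card_le_card fun Δ' hΔ' => ?_))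
      (card_filter_fibre_card_holes_lt_le hm hΔ hε hε₁ hμ (le_card_holeCandidates_div hμL hL))
    exact mem_filter.2 ((mem_filter.1 hΔ').imp_right And.right)
  · rw [filter_false_of_mem fun Δ' hΔ' h =>
      hL (numConstrained_congr (mem_fibre.1 hΔ').2 ▸ h.1), card_empty, Nat.cast_zero]
    positivity

lemma one_sub_le_uniformProb_le_card_holes (hm : 0 < m) (hε : 0 < ε) (hε₁ : ε ≤ 1) (hμ : 0 < μ)
    (hμL : μ * 2 ^ (m + 1) ≤ (2 * m).choose (m + 1) - L * m) :
    1 - (2 ^ (-(L / (4 * m))) *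
        Real.exp (localLogBound (2 * m) * (2 * m).choose m) ^ (2 * m) + 3 / (ε ^ 2 * μ)) ≤
      uniformProb (2 * m) fun Δ => (1 - ε) * μ ≤ #(holes m Δ) := by
  rw [sub_le_iff_le_add]
  refine (one_le_uniformProb_add_add fun Δ => ?_).trans <| add_le_add_right (add_le_add
    (uniformProb_lt_numConstrained_le hm L)
    (uniformProb_numConstrained_le_and_card_holes_lt_le hm hε hε₁ hμ hμL)) _
  rcases lt_or_ge L (numConstrained m Δ : ℝ) with hL | hL
  · exact .inr (.inl hL)
  · exact (le_or_gt _ _).imp_right fun hlt => .inr ⟨hL, hlt⟩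

end FewHoles

section Asymptotics

open Filter Asymptotics Topology Real

lemma tendsto_const_pow_div_pow_atTop (k : ℕ) {r : ℝ} (hr : 1 < r) :
    Tendsto (fun n : ℕ => r ^ n / (n : ℝ) ^ k) atTop atTop := by
  have hpos : ∀ᶠ n : ℕ in atTop, (n : ℝ) ^ k / r ^ n ∈ Set.Ioi 0 := by
    filter_upwards [eventually_gt_atTop 0] with n hn
    exact Set.mem_Ioi.2 (by positivity)
  have := (tendsto_nhdsWithin_iff.2
    ⟨tendsto_pow_const_div_const_pow_of_one_lt k hr, hpos⟩).inv_tendsto_nhdsGT_zero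
  exact this.congr fun n => inv_div _ _

lemma eventually_mul_le_mul_of_isEquivalent {α : Type*} {l : Filter α} {u v : α → ℝ}
    (huv : u ~[l] v) (hv : ∀ᶠ x in l, 0 < v x) {a b : ℝ} (hab : a < b) :
    ∀ᶠ x in l, a * v x ≤ b * u x := by
  have hratio := (isEquivalent_iff_tendsto_one (hv.mono fun _ h => h.ne')).1 huv
  have hlim : Tendsto (fun x => b * (u x / v x)) l (𝓝 b) := by
    simpa only [mul_one, Pi.div_apply] using hratio.const_mul b
  filter_upwards [hlim.eventually_const_le hab, hv] with x hle hpos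
  rwa [mul_div_assoc', le_div_iff₀ hpos] at hle

lemma choose_two_mul_self_isEquivalent :
    (fun m : ℕ => ((2 * m).choose m : ℝ)) ~[atTop] fun m => 4 ^ m / √(π * m) := by
  have hdouble : Tendsto (fun m : ℕ => 2 * m) atTop atTop :=
    tendsto_id.const_mul_atTop' two_pos
  have hstirling := Stirling.factorial_isEquivalent_stirling
  refine ((hstirling.comp_tendsto hdouble).div (hstirling.pow 2)).congr_left
    (.of_forall fun m => ?_) |>.congr_right ?_
  · simp only [Pi.div_apply, Pi.pow_apply, Function.comp_apply]
    rw [Nat.cast_choose ℝ (Nat.le_mul_of_pos_left m two_pos), two_mul, Nat.add_sub_cancel, sq]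
  · filter_upwards [eventually_gt_atTop 0] with m hm
    have hsqrt_two_mul : √(2 * (2 * m : ℕ) * π) = 2 * √(π * m) := by
      rw [show 2 * (2 * m : ℕ) * π = 2 ^ 2 * (π * m) by push_cast; ring,
        sqrt_mul (by positivity), sqrt_sq zero_le_two]
    have hsq_sqrt : √(2 * m * π) ^ 2 = 2 * √(π * m) ^ 2 := by
      rw [sq_sqrt (by positivity), sq_sqrt (by positivity), mul_assoc, mul_comm π]
    have hpow : ((2 * m : ℕ) / exp 1) ^ (2 * m) = 4 ^ m * ((m / exp 1) ^ m) ^ 2 := by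
      rw [Nat.cast_mul, mul_div_assoc, mul_pow, pow_mul, pow_mul']
      norm_num
    have hsqrt : √(π * m) ≠ 0 := (sqrt_pos.2 (by positivity)).ne'
    have hexp : (m / exp 1) ^ m ≠ 0 := by positivity
    simp only [Pi.div_apply, Pi.pow_apply, Function.comp_apply]
    rw [hsqrt_two_mul, hpow, mul_pow, hsq_sqrt]
    field_simp

lemma tendsto_choose_two_mul_self_div_pow_atTop (k : ℕ) :
    Tendsto (fun m : ℕ => ((2 * m).choose m : ℝ) / (m : ℝ) ^ k) atTop atTop := by
  refine tendsto_atTop_mono' _ ?_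
    (tendsto_const_pow_div_pow_atTop (k + 1) (show (1 : ℝ) < 4 by norm_num))
  filter_upwards [eventually_ge_atTop 4] with m hm
  have hm₀ : (0 : ℝ) < m := Nat.cast_pos.2 (by omega)
  have hcentral : (4 : ℝ) ^ m ≤ m * (2 * m).choose m := by
    exact_mod_cast (Nat.four_pow_lt_mul_centralBinom m hm).le
  rw [pow_succ', ← div_div]
  gcongr
  rwa [div_le_iff₀' hm₀]

lemma tendsto_pow_mul_localLogBound_two_mul (k : ℕ) :
    Tendsto (fun m : ℕ => (m : ℝ) ^ k * localLogBound (2 * m)) atTop (𝓝 0) := by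
  have hbase : (1 : ℝ) < 2 ^ (1 / 8 : ℝ) := one_lt_rpow one_lt_two (by norm_num)
  have hlim := ((tendsto_pow_const_div_const_pow_of_one_lt (k + 1) hbase).const_mul 2).add
    (tendsto_pow_const_div_const_pow_of_one_lt k hbase)
  rw [mul_zero, add_zero] at hlim
  refine hlim.congr fun m => ?_
  have hpow : (2 : ℝ) ^ (-(2 * m : ℕ) / 16 : ℝ) = ((2 ^ (1 / 8 : ℝ)) ^ m)⁻¹ := by
    rw [← rpow_natCast, ← rpow_mul zero_le_two, ← rpow_neg zero_le_two]
    push_cast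
    ring_nf
  rw [localLogBound, hpow]
  push_cast
  ring

/-- The threshold for `numConstrained` above which a complex on `2 * m` vertices is atypical.
It is negligible compared with `(2 * m).choose m / m`, yet large enough for the exponential moment
bound to make atypical complexes rare. -/
def constrainedThreshold (m : ℕ) : ℝ := (2 * m).choose m / m ^ 2

lemma two_rpow_neg_constrainedThreshold_mul_exp_pow {m : ℕ} (hm : 0 < m) :
    (2 : ℝ) ^ (-(constrainedThreshold m / (4 * m))) *
        exp (localLogBound (2 * m) * (2 * m).choose m) ^ (2 * m) =
      exp (-((2 * m).choose m / m ^ 3 * (log 2 / 4 - 2 * (m ^ 4 * localLogBound (2 * m))))) := by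
  rw [rpow_def_of_pos two_pos, ← exp_nat_mul, ← exp_add, constrainedThreshold]
  congr 1
  push_cast
  field_simp
  ring

lemma tendsto_two_rpow_neg_constrainedThreshold_mul_exp_pow :
    Tendsto (fun m : ℕ => (2 : ℝ) ^ (-(constrainedThreshold m / (4 * m))) *
      exp (localLogBound (2 * m) * (2 * m).choose m) ^ (2 * m)) atTop (𝓝 0) := by
  have hrate : Tendsto (fun m : ℕ => log 2 / 4 - 2 * ((m : ℝ) ^ 4 * localLogBound (2 * m))) atTop
      (𝓝 (log 2 / 4)) := by
    simpa only [mul_zero, sub_zero] using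
      ((tendsto_pow_mul_localLogBound_two_mul 4).const_mul 2).const_sub (log 2 / 4)
  have hexponent := (tendsto_choose_two_mul_self_div_pow_atTop 3).atTop_mul_pos
    (div_pos (log_pos one_lt_two) four_pos) hrate
  refine (tendsto_exp_neg_atTop_nhds_zero.comp hexponent).congr' ?_
  filter_upwards [eventually_gt_atTop 0] with m hm
  exact (two_rpow_neg_constrainedThreshold_mul_exp_pow hm).symm

/-- The scale `2 ^ ((n - 1) / 2) / √(π * n)` of the theorem at `n = 2 * m`. -/
def holeScale (m : ℕ) : ℝ := 2 ^ m / (2 * √(π * m))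

/-- A lower bound for the mean number of holes with `m + 1` vertices of a typical complex on
`2 * m` vertices: each of the at least `(2 * m).choose (m + 1) - constrainedThreshold m * m` hole
candidates is a hole with probability at least `2 ^ (-(m + 1))`. -/
def holeMean (m : ℕ) : ℝ :=
  ((2 * m).choose (m + 1) - constrainedThreshold m * m) / 2 ^ (m + 1)

lemma two_rpow_div_sqrt_eq_holeScale (m : ℕ) :
    (2 : ℝ) ^ (((2 * m : ℝ) - 1) / 2) / √(π * (2 * m)) = holeScale m := by
  rw [show ((2 * m : ℝ) - 1) / 2 = m - 1 / 2 by ring, rpow_sub two_pos, rpow_natCast,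
    ← sqrt_eq_rpow, mul_left_comm, sqrt_mul zero_le_two, div_div, ← mul_assoc,
    mul_self_sqrt zero_le_two, holeScale]

lemma tendsto_holeScale_atTop : Tendsto holeScale atTop atTop := by
  refine tendsto_atTop_mono' _ ?_
    ((tendsto_const_pow_div_pow_atTop 1 one_lt_two).atTop_div_const four_pos)
  filter_upwards [eventually_gt_atTop 0] with m hm
  have hm₁ : (1 : ℝ) ≤ m := Nat.one_le_cast.2 hm
  have hsqrt : √(π * m) ≤ 2 * m := by
    rw [sqrt_le_left (by positivity)]
    nlinarith [pi_le_four]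
  rw [holeScale, pow_one, div_div]
  exact div_le_div_of_nonneg_left (by positivity) (by positivity) (by linarith)

lemma holeMean_eq {m : ℕ} (hm : 0 < m) :
    holeMean m = (2 * m).choose m * (m / (m + 1) - 1 / m : ℝ) / 2 ^ (m + 1) := by
  have hsucc : ((2 * m).choose (m + 1) : ℝ) = (2 * m).choose m * (m / (m + 1)) := by
    have := Nat.choose_succ_right_eq (2 * m) m
    rw [show 2 * m - m = m by omega] at this
    rw [mul_div_assoc', eq_div_iff (by positivity)]
    exact_mod_cast this
  rw [holeMean, hsucc, constrainedThreshold]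
  field_simp

lemma holeMean_isEquivalent_holeScale : holeMean ~[atTop] holeScale := by
  have hfactor : (fun m : ℕ => (m / (m + 1) - 1 / m : ℝ)) ~[atTop] fun _ => 1 :=
    (isEquivalent_const_iff_tendsto one_ne_zero).2 (by
      simpa only [sub_zero] using (tendsto_natCast_div_add_atTop (1 : ℝ)).sub
        tendsto_one_div_atTop_nhds_zero_nat)
  refine ((choose_two_mul_self_isEquivalent.mul hfactor).div
    (IsEquivalent.refl (u := fun m : ℕ => (2 : ℝ) ^ (m + 1)))).congr_left ?_ |>.congr_right
      (.of_forall fun m => ?_)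
  · filter_upwards [eventually_gt_atTop 0] with m hm
    exact (holeMean_eq hm).symm
  · simp only [Pi.div_apply, Pi.mul_apply, holeScale]
    rw [show (4 : ℝ) ^ m = 2 ^ m * 2 ^ m by rw [← mul_pow]; norm_num, pow_succ]
    field_simp

lemma tendsto_uniformProb_mul_holeMean_le_card_holes {ε : ℝ} (hε : 0 < ε) (hε₁ : ε ≤ 1) :
    Tendsto (fun m => uniformProb (2 * m) fun Δ => (1 - ε) * holeMean m ≤ #(holes m Δ)) atTop
      (𝓝 1) := by
  have hmean := holeMean_isEquivalent_holeScale.symm.tendsto_atTop tendsto_holeScale_atTop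
  have hchebyshev : Tendsto (fun m => 3 / (ε ^ 2 * holeMean m)) atTop (𝓝 0) :=
    (hmean.const_mul_atTop (by positivity)).const_div_atTop 3
  have herror := (tendsto_two_rpow_neg_constrainedThreshold_mul_exp_pow.add hchebyshev).const_sub 1
  rw [add_zero, sub_zero] at herror
  refine tendsto_of_tendsto_of_tendsto_of_le_of_le' herror tendsto_const_nhds ?_
    (.of_forall fun m => uniformProb_le_one _)
  filter_upwards [eventually_gt_atTop 0, hmean.eventually_gt_atTop 0] with m hm hμ
  exact one_sub_le_uniformProb_le_card_holes hm hε hε₁ hμ (div_mul_cancel₀ _ (by positivity)).le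

end Asymptotics

end

/-- For `Δ ~ U(n)` with `n` even, with high probability the number of holes of
size `n/2 + 1` is at least `(1-ε)·2^{(n-1)/2}/√(πn)`. -/
theorem stmt5 (ε : ℝ) (hε : 0 < ε) :
    Filter.Tendsto (fun m : ℕ =>
      uniformProb (2 * m) (fun Δ =>
        (1 - ε) * (2 : ℝ) ^ (((2 * m : ℝ) - 1) / 2) / Real.sqrt (Real.pi * (2 * m)) ≤
          ((Finset.univ.filter (fun x : Finset (Fin (2 * m)) => IsHole Δ m x)).card : ℝ)))
      Filter.atTop (nhds 1) := by
  obtain ⟨δ, hδ, hδ₁, hδε⟩ : ∃ δ : ℝ, 0 < δ ∧ δ ≤ 1 ∧ 1 - ε < 1 - δ :=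
    ⟨min (ε / 2) 1, by positivity, min_le_right _ _, by linarith [min_le_left (ε / 2) 1]⟩
  refine tendsto_of_tendsto_of_tendsto_of_le_of_le'
    (tendsto_uniformProb_mul_holeMean_le_card_holes hδ hδ₁) tendsto_const_nhds ?_
    (.of_forall fun m => uniformProb_le_one _)
  filter_upwards [eventually_mul_le_mul_of_isEquivalent holeMean_isEquivalent_holeScale
    (tendsto_holeScale_atTop.eventually_gt_atTop 0) hδε] with m hm
  rw [← two_rpow_div_sqrt_eq_holeScale, mul_div_assoc'] at hm
  exact uniformProb_mono fun Δ hΔ => hm.trans hΔ
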